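/- arXiv:2110.01173 — 3 statements merged into one kernel-verified Lean document; each statement's English description precedes it below -/
import Mathlib

section
/- For all rational numbers a, b, c with a ≠ 0 and every complex number x, the four cubic polynomials f₁(x) = c·x³ + 3b·x² + 3a·x + 1, f₂(x) = (ab+c)·x³ + (3bc+2a²+b)·x² + (2b²+ac+3a)·x + ab + 1, f₃(x) = (a³+b³+c³)·x³ + 3(a²+2ab²+bc²)·x² + 3(a+2a²b+b²c)·x + 1 + 2a³ + b³, and f₄(x) = (ab+2abc+c³)·x³ + (2a²+b+2a²c+3ab²+bc+3b²c)·x² + (3a+3a²b+ac+2b²+2b²c+ac²)·x + 1 + 2ab + abc do not vanish simultaneously: at least one of f₁(x), f₂(x), f₃(x), f₄(x) is nonzero. -/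
/-!
The combination `f₄ - (1 + c) f₂ + (c - a b) f₁ = c x² (3 b (b - c) + (c² - 1) x)` constrains a
common zero `x` severely.

If `x` is irrational, both coefficients of any relation `α x + β = 0` with rational `α`, `β` vanish.
The relation above leaves only `c = 0`, `b = 0` and `b = c = ±1`, and eliminating powers of `x`
between `f₁` and `f₂` produces further such relations that settle these cases over `ℚ`.

If `x = u / w` in lowest terms, scale `(1, a x, b x², c x³)` to a primitive integer vector
`(z₀, z₁, z₂, z₃)` and look at the prime 2. The equation `f₃ = 0` becomes
`(u l)³ + (w n)³ + 2 (z₁ + z₂)³ = z₂³`, which has no solution modulo 4 with `z₁` odd, `z₂` even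
and `u` or `w` even. So `u` and `w` are odd; then `z₁` and `z₂` are even, two of the equations
form a homogeneous linear system in `(z₁, z₂)` with odd determinant, and `z₁ = 0`, that is, `a = 0`.
-/

theorem rat_pow_ne_prime {p n : ℕ} [Fact p.Prime] (hn : n ≠ 1) (r : ℚ) : r ^ n ≠ p := by
  intro h
  have hval : (n : ℤ) * padicValRat p r = 1 := by
    rw [← padicValRat.pow, h, padicValRat.self (Fact.out : p.Prime).one_lt]
  exact hn (by exact_mod_cast Int.eq_one_of_mul_eq_one_right (Int.natCast_nonneg n) hval)

theorem coeffs_eq_zero_of_irrational {K : Type*} [Field K] [CharZero K] {x : K}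
    (hx : ∀ q : ℚ, x ≠ q) {α β : ℚ} (h : (α : K) * x + β = 0) : α = 0 ∧ β = 0 := by
  have hα : α = 0 := by
    by_contra hα
    have hα' : (α : K) ≠ 0 := by exact_mod_cast hα
    apply hx (-β / α)
    push_cast
    field_simp
    linear_combination h
  exact ⟨hα, by simpa [hα] using h⟩

theorem eq_zero_of_det_ne_zero {R : Type*} [CommRing R] [NoZeroDivisors R] {p q r s x y : R}
    (h₁ : p * x + q * y = 0) (h₂ : r * x + s * y = 0) (hdet : p * s - q * r ≠ 0) : x = 0 := by
  have hx : (p * s - q * r) * x = 0 := by linear_combination s * h₁ - q * h₂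
  exact (mul_eq_zero.1 hx).resolve_left hdet

theorem exists_primitive_multiple (p q : ℚ) : ∃ m k l : ℤ, m ≠ 0 ∧ (k : ℚ) = m * p ∧
    (l : ℚ) = m * q ∧ ∀ d, d ∣ m → d ∣ k → d ∣ l → IsUnit d := by
  let S : Set ℤ := {m | m ≠ 0 ∧ (∃ k : ℤ, (k : ℚ) = m * p) ∧ ∃ l : ℤ, (l : ℚ) = m * q}
  have hS : S.Nonempty := by
    refine ⟨p.den * q.den, by simp, ⟨p.num * q.den, ?_⟩, ⟨q.num * p.den, ?_⟩⟩ <;> push_cast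
    · rw [← Rat.mul_den_eq_num p]; ring
    · rw [← Rat.mul_den_eq_num q]; ring
  obtain ⟨m, ⟨hm, ⟨k, hk⟩, l, hl⟩, hmin⟩ :=
    exists_minimalFor_of_wellFoundedLT (· ∈ S) Int.natAbs hS
  refine ⟨m, k, l, hm, hk, hl, ?_⟩
  rintro d ⟨m', rfl⟩ ⟨k', rfl⟩ ⟨l', rfl⟩
  have hd : d ≠ 0 := left_ne_zero_of_mul hm
  have hm' : m' ≠ 0 := right_ne_zero_of_mul hm
  have hdq : (d : ℚ) ≠ 0 := by exact_mod_cast hd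
  have hmem : m' ∈ S := by
    refine ⟨hm', ⟨k', mul_left_cancel₀ hdq ?_⟩, ⟨l', mul_left_cancel₀ hdq ?_⟩⟩
    · push_cast at hk; linear_combination hk
    · push_cast at hl; linear_combination hl
  have hd_pos : 0 < d.natAbs := Int.natAbs_pos.2 hd
  have hle : d.natAbs * m'.natAbs ≤ 1 * m'.natAbs := by
    rw [one_mul, ← Int.natAbs_mul]
    refine hmin hmem ?_
    rw [Int.natAbs_mul]
    exact Nat.le_mul_of_pos_left _ hd_pos
  have hd_le : d.natAbs ≤ 1 := Nat.le_of_mul_le_mul_right hle (Int.natAbs_pos.2 hm')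
  exact Int.isUnit_iff_natAbs_eq.2 (le_antisymm hd_le hd_pos)

theorem cube_add_cube_add_two_mul_cube_ne_cube {p q r s : ℤ} (hp : Even p) (hr : Even r)
    (hs : Odd s) : p ^ 3 + q ^ 3 + 2 * s ^ 3 ≠ r ^ 3 := by
  intro h
  have hq : Even q := by
    simpa [parity_simps, hp, hr] using congrArg Even h
  have four_dvd_cube : ∀ {m : ℤ}, Even m → 4 ∣ m ^ 3 := by
    rintro _ ⟨k, rfl⟩
    exact ⟨2 * k ^ 3, by ring⟩
  obtain ⟨k, hk⟩ : Odd (s ^ 3) := hs.pow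
  have hp₄ := four_dvd_cube hp
  have hq₄ := four_dvd_cube hq
  have hr₄ := four_dvd_cube hr
  omega

/-- The equations `f₁ = f₂ = f₃ = f₄ = 0` at the point `x`, in the equivalent form `f₁ = 0`,
`f₂ - f₁ = 0`, `f₃ = 0` and `f₄ - (1 + c) * f₂ + (c - a * b) * f₁ = 0`. -/
structure CommonZero {K : Type*} [Field K] (a b c x : K) : Prop where
  eq₁ : 1 + 3 * a * x + 3 * b * x ^ 2 + c * x ^ 3 = 0
  eq₂ : a * b * (1 + x ^ 3) + (2 * b ^ 2 + a * c) * x + (2 * a ^ 2 + 3 * b * c - 2 * b) * x ^ 2 = 0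
  eq₃ : (1 + a * x) ^ 3 + 2 * (a + b * x) ^ 3 + (b + c * x) ^ 3 = (b * x) ^ 3
  eq₄ : c * x ^ 2 * (3 * b * (b - c) + (c ^ 2 - 1) * x) = 0

/-- An integral model of a common zero at a nonzero rational `x = u / w`: `(z₀, z₁, z₂, z₃)` stands
for a multiple of `(1, a * x, b * x ^ 2, c * x ^ 3)`, primitive so that parities carry information,
and `eq₁` to `eq₄` are the fields of `CommonZero` with denominators cleared. -/
structure IntegralModel (u w z₀ z₁ z₂ z₃ : ℤ) : Prop where
  num_ne_zero : u ≠ 0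
  den_ne_zero : w ≠ 0
  coprime : IsCoprime u w
  primitive : ∀ d, d ∣ z₀ → d ∣ z₁ → d ∣ z₂ → IsUnit d
  eq₁ : z₀ + 3 * z₁ + 3 * z₂ + z₃ = 0
  eq₂ : u ^ 3 * (2 * z₁ ^ 2 + z₁ * z₂ - 2 * z₂ * z₀) +
    w ^ 3 * (2 * z₂ ^ 2 + z₁ * z₂ + 3 * z₂ * z₃ + z₁ * z₃) = 0
  eq₃ : u ^ 6 * (z₀ + z₁) ^ 3 + u ^ 3 * w ^ 3 * (2 * (z₁ + z₂) ^ 3 - z₂ ^ 3) +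
    w ^ 6 * (z₂ + z₃) ^ 3 = 0
  eq₄ : z₃ * (u ^ 6 * z₀ ^ 2 - w ^ 6 * z₃ ^ 2 - 3 * z₂ * w ^ 5 * (z₂ * u - z₃ * w)) = 0

namespace IntegralModel

variable {u w z₀ z₁ z₂ z₃ : ℤ}

theorem num_dvd (h : IntegralModel u w z₀ z₁ z₂ z₃) : u ∣ z₂ + z₃ := by
  have hcube : u ^ 3 ∣ (w ^ 2 * (z₂ + z₃)) ^ 3 :=
    ⟨-(u ^ 3 * (z₀ + z₁) ^ 3 + w ^ 3 * (2 * (z₁ + z₂) ^ 3 - z₂ ^ 3)), by linear_combination h.eq₃⟩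
  exact h.coprime.pow_right.dvd_of_dvd_mul_left ((Int.pow_dvd_pow_iff three_ne_zero).1 hcube)

theorem den_dvd (h : IntegralModel u w z₀ z₁ z₂ z₃) : w ∣ z₀ + z₁ := by
  have hcube : w ^ 3 ∣ (u ^ 2 * (z₀ + z₁)) ^ 3 :=
    ⟨-(w ^ 3 * (z₂ + z₃) ^ 3 + u ^ 3 * (2 * (z₁ + z₂) ^ 3 - z₂ ^ 3)), by linear_combination h.eq₃⟩
  exact h.coprime.symm.pow_right.dvd_of_dvd_mul_left ((Int.pow_dvd_pow_iff three_ne_zero).1 hcube)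

theorem exists_cube_eq (h : IntegralModel u w z₀ z₁ z₂ z₃) :
    ∃ l n, z₀ + z₁ = w * l ∧ z₂ + z₃ = u * n ∧
      (u * l) ^ 3 + (w * n) ^ 3 + 2 * (z₁ + z₂) ^ 3 = z₂ ^ 3 := by
  obtain ⟨l, hl⟩ := h.den_dvd
  obtain ⟨n, hn⟩ := h.num_dvd
  refine ⟨l, n, hl, hn, mul_left_cancel₀
    (mul_ne_zero (pow_ne_zero 3 h.num_ne_zero) (pow_ne_zero 3 h.den_ne_zero)) ?_⟩
  have heq := h.eq₃
  rw [hl, hn] at heq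
  linear_combination heq

theorem not_even_and_even (h : IntegralModel u w z₀ z₁ z₂ z₃) : ¬ (Even u ∧ Even w) := by
  rintro ⟨hu, hw⟩
  exact absurd (h.coprime.isUnit_of_dvd' hu.two_dvd hw.two_dvd) (by decide)

theorem not_all_even (h : IntegralModel u w z₀ z₁ z₂ z₃) : ¬ (Even z₀ ∧ Even z₁ ∧ Even z₂) := by
  rintro ⟨hz₀, hz₁, hz₂⟩
  exact absurd (h.primitive 2 hz₀.two_dvd hz₁.two_dvd hz₂.two_dvd) (by decide)

theorem even_iff_even_iff (h : IntegralModel u w z₀ z₁ z₂ z₃) :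
    (Even z₀ ↔ Even z₁) ↔ (Even z₂ ↔ Even z₃) := by
  have hsum : Even (z₀ + z₁ + (z₂ + z₃)) := ⟨-(z₁ + z₂), by linear_combination h.eq₁⟩
  simpa only [Int.even_add] using hsum

theorem odd_num (h : IntegralModel u w z₀ z₁ z₂ z₃) : Odd u := by
  by_contra hu
  rw [Int.not_odd_iff_even] at hu
  have hw : ¬ Even w := fun hw ↦ h.not_even_and_even ⟨hu, hw⟩
  obtain ⟨l, n, -, hn, hcube⟩ := h.exists_cube_eq
  have hz₂₃ : Even z₂ ↔ Even z₃ := by simpa [parity_simps, hu] using congrArg Even hn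
  have hz₀₁ : Even z₀ ↔ Even z₁ := h.even_iff_even_iff.2 hz₂₃
  have hz₂ : Even z₂ := by
    have hmod : (Even z₁ ∨ Even z₂ ↔ Even z₂ ∨ Even z₃) ↔ Even z₁ ∨ Even z₃ := by
      simpa [parity_simps, hu, hw, (by decide : ¬ Even (3 : ℤ))] using congrArg Even h.eq₂
    tauto
  have hz₁ : Odd z₁ := Int.not_even_iff_odd.1 fun hz₁ ↦ h.not_all_even ⟨hz₀₁.2 hz₁, hz₁, hz₂⟩
  exact cube_add_cube_add_two_mul_cube_ne_cube (hu.mul_right l) hz₂ (hz₁.add_even hz₂) hcube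

theorem odd_den_or_even_z₂ (h : IntegralModel u w z₀ z₁ z₂ z₃) : Odd w ∨ Even z₂ := by
  rw [← Int.not_even_iff_odd]
  by_contra! ⟨hw, hz₂⟩
  have hu : ¬ Even u := fun hu ↦ h.not_even_and_even ⟨hu, hw⟩
  obtain ⟨l, n, hl, -, hcube⟩ := h.exists_cube_eq
  have hl_odd : ¬ Even l := by
    simpa [parity_simps, hu, hw, hz₂] using congrArg Even hcube
  have hz₀₁ : Even z₀ ↔ Even z₁ := by simpa [parity_simps, hw] using congrArg Even hl
  have hz₃ : ¬ Even z₃ := fun hz₃ ↦ hz₂ ((h.even_iff_even_iff.1 hz₀₁).2 hz₃)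
  have hz₃_ne : z₃ ≠ 0 := by rintro rfl; exact hz₃ Even.zero
  have hpow_dvd : w ^ 5 ∣ z₀ ^ 2 := by
    refine (h.coprime.symm.pow : IsCoprime (w ^ 5) (u ^ 6)).dvd_of_dvd_mul_left
      ⟨w * z₃ ^ 2 + 3 * z₂ * (z₂ * u - z₃ * w), ?_⟩
    linear_combination (mul_eq_zero.1 h.eq₄).resolve_left hz₃_ne
  obtain ⟨k, rfl⟩ : w ^ 2 ∣ z₀ := by
    rw [← Int.pow_dvd_pow_iff two_ne_zero]
    exact Dvd.dvd.trans ⟨w, by ring⟩ hpow_dvd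
  have hz₁ : z₁ = w * (l - w * k) := by linear_combination hl
  have hfactor : w * (u ^ 3 * ((l - w * k) * (2 * z₁ + z₂) - 2 * w * k * z₂) +
      w ^ 2 * (2 * z₂ ^ 2 + z₁ * z₂ + 3 * z₂ * z₃ + z₁ * z₃)) = 0 := by
    linear_combination h.eq₂ - u ^ 3 * (2 * z₁ + z₂) * hz₁
  have heven := congrArg Even ((mul_eq_zero.1 hfactor).resolve_left h.den_ne_zero)
  simp [parity_simps, hu, hw, hz₂, hl_odd] at heven

theorem odd_den (h : IntegralModel u w z₀ z₁ z₂ z₃) : Odd w := by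
  by_contra hw
  have hz₂ : Even z₂ := h.odd_den_or_even_z₂.resolve_left hw
  rw [Int.not_odd_iff_even] at hw
  obtain ⟨l, n, hl, -, hcube⟩ := h.exists_cube_eq
  have hz₀₁ : Even z₀ ↔ Even z₁ := by simpa [parity_simps, hw] using congrArg Even hl
  have hz₁ : Odd z₁ := Int.not_even_iff_odd.1 fun hz₁ ↦ h.not_all_even ⟨hz₀₁.2 hz₁, hz₁, hz₂⟩
  rw [add_comm ((u * l) ^ 3)] at hcube
  exact cube_add_cube_add_two_mul_cube_ne_cube (hw.mul_right n) hz₂ (hz₁.add_even hz₂) hcube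

theorem even_z₂ (h : IntegralModel u w z₀ z₁ z₂ z₃) : Even z₂ := by
  have hu := Int.not_even_iff_odd.2 h.odd_num
  have hw := Int.not_even_iff_odd.2 h.odd_den
  have hsum := h.even_iff_even_iff
  have hmod : ((Even z₀ ↔ Even z₁) ↔ Even z₂) ↔ (Even z₂ ↔ Even z₃) := by
    simpa [parity_simps, hu, hw] using congrArg Even h.eq₃
  tauto

theorem even_z₁ (h : IntegralModel u w z₀ z₁ z₂ z₃) : Even z₁ := by
  by_contra hz₁
  have hu := h.odd_num
  have hw := h.odd_den
  have hz₂ := h.even_z₂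
  have hu' := Int.not_even_iff_odd.2 hu
  have hw' := Int.not_even_iff_odd.2 hw
  have hz₃ : Even z₃ := by simpa [parity_simps, hu', hw', hz₁, hz₂] using congrArg Even h.eq₂
  have hz₀ : ¬ Even z₀ := by simpa [hz₁, hz₂, hz₃] using h.even_iff_even_iff
  obtain rfl : z₃ = 0 := by
    refine (mul_eq_zero.1 h.eq₄).resolve_right fun heq ↦ ?_
    simpa [parity_simps, hu', hw', hz₂, hz₃, hz₀] using congrArg Even heq
  obtain ⟨m, hm⟩ : Even (u ^ 3 + w ^ 3) := hu.pow.add_odd hw.pow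
  obtain ⟨k, rfl⟩ := hz₂
  have hmod4 : 2 * (u ^ 3 * z₁ ^ 2) = 4 * (k * (u ^ 3 * z₀ - 2 * k * w ^ 3) - m * z₁ * k) := by
    linear_combination h.eq₂ - 2 * z₁ * k * hm
  have heven : Even (u ^ 3 * z₁ ^ 2) := even_iff_two_dvd.2 (by omega)
  simp [parity_simps, hu', hz₁] at heven

theorem z₁_eq_zero (h : IntegralModel u w z₀ z₁ z₂ z₃) : z₁ = 0 := by
  have hu := Int.not_even_iff_odd.2 h.odd_num
  have hw := Int.not_even_iff_odd.2 h.odd_den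
  have hz₁ := h.even_z₁
  have hz₂ := h.even_z₂
  have hz₀ : ¬ Even z₀ := fun hz₀ ↦ h.not_all_even ⟨hz₀, hz₁, hz₂⟩
  have hz₃ : ¬ Even z₃ := by simpa [hz₁, hz₂, hz₀] using h.even_iff_even_iff
  have hz₃_ne : z₃ ≠ 0 := by rintro rfl; exact hz₃ Even.zero
  have heq₄ := (mul_eq_zero.1 h.eq₄).resolve_left hz₃_ne
  have hlin₂ : (u ^ 3 * (2 * z₁ + z₂) + w ^ 3 * (z₂ + z₃)) * z₁ +
      (w ^ 3 * (2 * z₂ + 3 * z₃) - 2 * u ^ 3 * z₀) * z₂ = 0 := by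
    linear_combination h.eq₂
  have hlin₃ : (u ^ 6 * (3 * z₀ ^ 2 + 3 * z₀ * z₁ + z₁ ^ 2) - 3 * w ^ 6 * z₃ ^ 2 +
        2 * u ^ 3 * w ^ 3 * (z₁ ^ 2 + 3 * z₁ * z₂ + 3 * z₂ ^ 2)) * z₁ +
      (u ^ 3 * w ^ 3 * z₂ ^ 2 + w ^ 6 * (3 * z₃ + z₂) * z₂ +
        3 * w ^ 5 * z₀ * (z₂ * u - z₃ * w)) * z₂ = 0 := by
    linear_combination h.eq₃ - z₀ * heq₄ - w ^ 6 * z₃ ^ 2 * h.eq₁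
  refine eq_zero_of_det_ne_zero hlin₂ hlin₃ fun hdet ↦ ?_
  simpa [parity_simps, hu, hw, hz₁, hz₂, hz₀, hz₃, (by decide : ¬ Even (3 : ℤ))] using
    congrArg Even hdet

end IntegralModel

namespace CommonZero

theorem ne_zero {K : Type*} [Field K] {a b c x : K} (h : CommonZero a b c x) : x ≠ 0 := by
  rintro rfl
  simpa using h.eq₁

theorem exists_integralModel {a b c x : ℚ} (h : CommonZero a b c x) :
    ∃ u w z₀ z₁ z₂ z₃ : ℤ, z₀ ≠ 0 ∧ (z₁ : ℚ) = z₀ * (a * x) ∧ IntegralModel u w z₀ z₁ z₂ z₃ := by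
  obtain ⟨z₀, z₁, z₂, hz₀, hz₁, hz₂, hprim⟩ := exists_primitive_multiple (a * x) (b * x ^ 2)
  obtain ⟨z₃, hsum⟩ : ∃ z₃, z₀ + 3 * z₁ + 3 * z₂ + z₃ = 0 := ⟨-(z₀ + 3 * z₁ + 3 * z₂), by ring⟩
  have hz₃ : (z₃ : ℚ) = z₀ * (c * x ^ 3) := by
    have hsumQ : (z₀ + 3 * z₁ + 3 * z₂ + z₃ : ℚ) = 0 := by exact_mod_cast hsum
    rw [hz₁, hz₂] at hsumQ
    linear_combination hsumQ - z₀ * h.eq₁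
  have hu : (x.num : ℚ) = x * x.den := (Rat.mul_den_eq_num x).symm
  refine ⟨x.num, x.den, z₀, z₁, z₂, z₃, hz₀, hz₁,
    { num_ne_zero := Rat.num_ne_zero.2 h.ne_zero
      den_ne_zero := by simp
      coprime := Int.isCoprime_iff_gcd_eq_one.2 x.reduced
      primitive := hprim
      eq₁ := hsum
      eq₂ := ?_
      eq₃ := ?_
      eq₄ := ?_ }⟩ <;>
    rw [← Int.cast_inj (α := ℚ)] <;>
    push_cast <;> simp only [hz₁, hz₂, hz₃, hu]
  · linear_combination x ^ 3 * (x.den : ℚ) ^ 3 * z₀ ^ 2 * h.eq₂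
  · linear_combination x ^ 6 * (x.den : ℚ) ^ 6 * z₀ ^ 3 * h.eq₃
  · linear_combination -(x ^ 6 * (x.den : ℚ) ^ 6 * z₀ ^ 3) * h.eq₄

theorem eq_zero_of_rat {a b c x : ℚ} (h : CommonZero a b c x) : a = 0 := by
  obtain ⟨u, w, z₀, z₁, z₂, z₃, hz₀, hz₁, hmodel⟩ := h.exists_integralModel
  simpa [hmodel.z₁_eq_zero, hz₀, h.ne_zero] using hz₁

section Irrational

variable {K : Type*} [Field K] [CharZero K] {a b c : ℚ} {x : K}

theorem of_ratCast {q : ℚ} (h : CommonZero (a : K) b c q) : CommonZero a b c q where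
  eq₁ := by exact_mod_cast h.eq₁
  eq₂ := by exact_mod_cast h.eq₂
  eq₃ := by exact_mod_cast h.eq₃
  eq₄ := by exact_mod_cast h.eq₄

theorem cubic_coeff_ne_zero_of_irrational (hx : ∀ q : ℚ, x ≠ q)
    (h : CommonZero (a : K) b c x) : c ≠ 0 := by
  rintro rfl
  simp only [Rat.cast_zero] at h
  obtain ⟨e₁, e₀⟩ : 6 * b ^ 3 + 5 * a * b - 3 * a ^ 3 = 0 ∧ 3 * a * b ^ 2 - a ^ 2 + 2 * b = 0 := by
    refine coeffs_eq_zero_of_irrational hx ?_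
    push_cast
    linear_combination 3 * (b : K) * h.eq₂ - (a * b * x + (a ^ 2 - 2 * b : K)) * h.eq₁
  have ha : a ≠ 0 := by
    rintro rfl
    obtain rfl : b = 0 := by simpa using e₀
    simpa using h.eq₁
  have hb : b ≠ 0 := by
    rintro rfl
    exact ha (by simpa using e₀)
  have e₂ : 6 * b ^ 2 - a - 9 * a ^ 2 * b = 0 :=
    mul_left_cancel₀ hb (by linear_combination e₁ - 3 * a * e₀)
  have hfactor : (a + 3 * b ^ 2) * (a + 6 * b ^ 2) = 0 :=
    mul_left_cancel₀ ha (by linear_combination (6 * b ^ 2 - a) * e₀ - 2 * b * e₂)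
  rcases mul_eq_zero.1 hfactor with ha' | ha'
  · obtain rfl : a = -(3 * b ^ 2) := by linear_combination ha'
    have hcube : (3 * b) ^ 3 = (3 : ℕ) :=
      mul_left_cancel₀ hb (by push_cast; linear_combination -(3 / 2) * e₀)
    exact rat_pow_ne_prime (by norm_num) _ hcube
  · obtain rfl : a = -(6 * b ^ 2) := by linear_combination ha'
    have hcube : 27 * b ^ 3 = 1 :=
      mul_left_cancel₀ hb (by linear_combination -(1 / 2) * e₀)
    have hcubeK : 27 * (b : K) ^ 3 = 1 := by exact_mod_cast hcube
    have hsq : (3 * b : K) * (x - 3 * b) ^ 2 = 0 := by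
      have heq₁ := h.eq₁
      push_cast at heq₁
      linear_combination heq₁ + hcubeK
    have hbK : (3 * b : K) ≠ 0 := by simpa using hb
    refine hx (3 * b) ?_
    push_cast
    exact sub_eq_zero.1 (by simpa [hbK] using hsq)

theorem eq_zero_of_irrational_of_quadratic_coeff_zero (hx : ∀ q : ℚ, x ≠ q)
    (h : CommonZero (a : K) 0 c x) : a = 0 := by
  have hlin : 2 * a ^ 2 = 0 ∧ a * c = 0 := by
    refine coeffs_eq_zero_of_irrational hx (mul_left_cancel₀ h.ne_zero ?_)
    push_cast
    linear_combination h.eq₂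
  simpa using hlin.1

theorem not_one_one_of_irrational (hx : ∀ q : ℚ, x ≠ q) :
    ¬ CommonZero (a : K) 1 1 x := by
  intro h
  obtain ⟨e₁, e₀⟩ : 2 * a ^ 2 - 3 * a + 1 = 0 ∧ 2 + a - 3 * a ^ 2 = 0 := by
    refine coeffs_eq_zero_of_irrational hx (mul_left_cancel₀ h.ne_zero ?_)
    push_cast
    linear_combination h.eq₂ - a * h.eq₁
  obtain rfl : a = 1 := by linear_combination -(3 / 7) * e₁ - (2 / 7) * e₀
  have hcube : (x + 1) ^ 3 = 0 := by
    have heq₁ := h.eq₁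
    push_cast at heq₁
    linear_combination heq₁
  refine hx (-1) ?_
  push_cast
  exact eq_neg_of_add_eq_zero_left (pow_eq_zero_iff three_ne_zero |>.1 hcube)

theorem not_neg_one_neg_one_of_irrational (hx : ∀ q : ℚ, x ≠ q) :
    ¬ CommonZero (a : K) (-1) (-1) x := by
  intro h
  have hquad₁ : -2 * a * x ^ 2 + (2 * a ^ 2 - 3 * a + 5) * x + (3 * a ^ 2 - a + 2 : K) = 0 :=
    mul_left_cancel₀ h.ne_zero (by linear_combination h.eq₂ + a * h.eq₁)
  have hquad₂ : (2 * a ^ 2 + 3 * a + 5) * x ^ 2 + (2 - a - 3 * a ^ 2) * x - (2 * a : K) = 0 := by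
    linear_combination h.eq₂ - a * h.eq₁
  have hlin : 4 * a ^ 4 - 6 * a ^ 3 + 9 * a ^ 2 + 4 * a + 25 = 0 ∧
      6 * a ^ 4 + 7 * a ^ 3 + 12 * a ^ 2 + a + 10 = 0 := by
    refine coeffs_eq_zero_of_irrational hx ?_
    push_cast
    linear_combination (2 * a ^ 2 + 3 * a + 5 : K) * hquad₁ + 2 * (a : K) * hquad₂
  have hpos : 0 < 4 * a ^ 4 - 6 * a ^ 3 + 9 * a ^ 2 + 4 * a + 25 := by
    calc 0 < (2 * a ^ 2 - 3 / 2 * a) ^ 2 + 27 / 4 * (a + 8 / 27) ^ 2 + 659 / 27 := by positivity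
      _ = _ := by ring
  exact hpos.ne' hlin.1

theorem eq_zero_of_irrational (hx : ∀ q : ℚ, x ≠ q) (h : CommonZero (a : K) b c x) : a = 0 := by
  have hcx : (c : K) * x ^ 2 ≠ 0 :=
    mul_ne_zero (by exact_mod_cast cubic_coeff_ne_zero_of_irrational hx h)
      (pow_ne_zero 2 h.ne_zero)
  obtain ⟨e₁, e₀⟩ : c ^ 2 - 1 = 0 ∧ 3 * b * (b - c) = 0 := by
    refine coeffs_eq_zero_of_irrational hx ?_
    push_cast
    linear_combination (mul_eq_zero.1 h.eq₄).resolve_left hcx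
  obtain rfl | hbc : b = 0 ∨ b - c = 0 := by simpa using e₀
  · exact eq_zero_of_irrational_of_quadratic_coeff_zero hx (by simpa using h)
  obtain rfl : b = c := sub_eq_zero.1 hbc
  rcases sq_eq_one_iff.1 (sub_eq_zero.1 e₁) with rfl | rfl
  · exact absurd (by simpa using h) (not_one_one_of_irrational hx)
  · exact absurd (by simpa using h) (not_neg_one_neg_one_of_irrational hx)

theorem eq_zero (h : CommonZero (a : K) b c x) : a = 0 := by
  by_cases hx : ∃ q : ℚ, x = q
  · obtain ⟨q, rfl⟩ := hx
    exact eq_zero_of_rat (of_ratCast h)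
  · exact eq_zero_of_irrational (not_exists.1 hx) h

end Irrational

end CommonZero

theorem stmt_0_general {K : Type*} [Field K] [CharZero K] (a b c : ℚ) (ha : a ≠ 0) (x : K) :
    (c : K) * x ^ 3 + 3 * (b : K) * x ^ 2 + 3 * (a : K) * x + 1 ≠ 0 ∨
    ((a : K) * b + c) * x ^ 3 + (3 * (b : K) * c + 2 * (a : K) ^ 2 + b) * x ^ 2 +
      (2 * (b : K) ^ 2 + (a : K) * c + 3 * a) * x + (a : K) * b + 1 ≠ 0 ∨
    ((a : K) ^ 3 + (b : K) ^ 3 + (c : K) ^ 3) * x ^ 3 +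
      3 * ((a : K) ^ 2 + 2 * (a : K) * b ^ 2 + (b : K) * c ^ 2) * x ^ 2 +
      3 * ((a : K) + 2 * (a : K) ^ 2 * b + (b : K) ^ 2 * c) * x +
      1 + 2 * (a : K) ^ 3 + (b : K) ^ 3 ≠ 0 ∨
    ((a : K) * b + 2 * (a : K) * b * c + (c : K) ^ 3) * x ^ 3 +
      (2 * (a : K) ^ 2 + (b : K) + 2 * (a : K) ^ 2 * c + 3 * (a : K) * b ^ 2 +
        (b : K) * c + 3 * (b : K) ^ 2 * c) * x ^ 2 +
      (3 * (a : K) + 3 * (a : K) ^ 2 * b + (a : K) * c + 2 * (b : K) ^ 2 +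
        2 * (b : K) ^ 2 * c + (a : K) * c ^ 2) * x +
      1 + 2 * (a : K) * b + (a : K) * b * c ≠ 0 := by
  by_contra! ⟨h₁, h₂, h₃, h₄⟩
  have h : CommonZero (a : K) b c x :=
    { eq₁ := by linear_combination h₁
      eq₂ := by linear_combination h₂ - h₁
      eq₃ := by linear_combination h₃
      eq₄ := by linear_combination h₄ - (1 + c) * h₂ + (c - a * b) * h₁ }
  exact ha h.eq_zero

theorem stmt_0 (a b c : ℚ) (ha : a ≠ 0) (x : ℂ) :
    (c : ℂ) * x ^ 3 + 3 * (b : ℂ) * x ^ 2 + 3 * (a : ℂ) * x + 1 ≠ 0 ∨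
    ((a : ℂ) * b + c) * x ^ 3 + (3 * (b : ℂ) * c + 2 * (a : ℂ) ^ 2 + b) * x ^ 2 +
      (2 * (b : ℂ) ^ 2 + (a : ℂ) * c + 3 * a) * x + (a : ℂ) * b + 1 ≠ 0 ∨
    ((a : ℂ) ^ 3 + (b : ℂ) ^ 3 + (c : ℂ) ^ 3) * x ^ 3 +
      3 * ((a : ℂ) ^ 2 + 2 * (a : ℂ) * b ^ 2 + (b : ℂ) * c ^ 2) * x ^ 2 +
      3 * ((a : ℂ) + 2 * (a : ℂ) ^ 2 * b + (b : ℂ) ^ 2 * c) * x +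
      1 + 2 * (a : ℂ) ^ 3 + (b : ℂ) ^ 3 ≠ 0 ∨
    ((a : ℂ) * b + 2 * (a : ℂ) * b * c + (c : ℂ) ^ 3) * x ^ 3 +
      (2 * (a : ℂ) ^ 2 + (b : ℂ) + 2 * (a : ℂ) ^ 2 * c + 3 * (a : ℂ) * b ^ 2 +
        (b : ℂ) * c + 3 * (b : ℂ) ^ 2 * c) * x ^ 2 +
      (3 * (a : ℂ) + 3 * (a : ℂ) ^ 2 * b + (a : ℂ) * c + 2 * (b : ℂ) ^ 2 +
        2 * (b : ℂ) ^ 2 * c + (a : ℂ) * c ^ 2) * x +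
      1 + 2 * (a : ℂ) * b + (a : ℂ) * b * c ≠ 0 :=
  stmt_0_general a b c ha x
end

section
/- Let a, b, c be rational numbers with a·b·c ≠ 0, and let (w,x,y,z) = Ĝ(1,a,b,c), where Ĝ(w,x,y,z) = (w³+2x³+y³, w²x+2x²y+y²z, wx²+2xy²+yz², x³+2y³+z³). Suppose condition R(a,b,c) holds and condition S(w,x,y,z) holds. Then (a,b,c) is one of (−1, 1, −1), (1, −1, −1), (1, −1, 1), or (1/2, −1/2, −1). -/
/-- Condition R: the gadget `G₁` fails to work on `[1,a,b,c]`. -/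
def condR (a b c : ℚ) : Prop :=
  c + 1 = 0 ∨
  a * b + c ^ 2 + c + 1 = 0 ∨
  2 * a * b + c ^ 2 + 1 = 0 ∨
  3 * a * b + c ^ 2 - c + 1 = 0 ∨
  4 * a * b + c ^ 2 - 2 * c + 1 = 0

/-- Condition S: the normalized signature `[w,x,y,z]` is degenerate,
generalized equality, or affine. -/
def condS (w x y z : ℚ) : Prop :=
  (x ^ 2 = w * y ∧ y ^ 2 = x * z) ∨
  (x = 0 ∧ y = 0) ∨
  (w = y ∧ x = 0 ∧ z = 0) ∨
  (w + y = 0 ∧ x = 0 ∧ z = 0) ∨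
  (w = x ∧ w + y = 0 ∧ w + z = 0) ∨
  (w + x = 0 ∧ w + y = 0 ∧ w = z)

/-- Condition T: the gadget `G₁` fails to work on the normalized signature `[w,x,y,z]`. -/
def condT (w x y z : ℚ) : Prop :=
  z * w + w ^ 2 = 0 ∨
  x * y + z ^ 2 + z * w + w ^ 2 = 0 ∨
  2 * x * y + z ^ 2 + w ^ 2 = 0 ∨
  3 * x * y + z ^ 2 - z * w + w ^ 2 = 0 ∨
  4 * x * y + z ^ 2 - 2 * z * w + w ^ 2 = 0 ∨
  x * y = w * z

/-- The signature produced by the auxiliary gadget `G_aux` from `[w,x,y,z]`. -/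
def Ghat (p : ℚ × ℚ × ℚ × ℚ) : ℚ × ℚ × ℚ × ℚ :=
  (p.1 ^ 3 + 2 * p.2.1 ^ 3 + p.2.2.1 ^ 3,
   p.1 ^ 2 * p.2.1 + 2 * p.2.1 ^ 2 * p.2.2.1 + p.2.2.1 ^ 2 * p.2.2.2,
   p.1 * p.2.1 ^ 2 + 2 * p.2.1 * p.2.2.1 ^ 2 + p.2.2.1 * p.2.2.2 ^ 2,
   p.2.1 ^ 3 + 2 * p.2.2.1 ^ 3 + p.2.2.2 ^ 3)

/-! Let `D = c - ab`. Condition R says that `(c + 1)² = k D` for some `k ∈ {0, …, 4}`. Read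
`[w,x,y,z]` as the binary cubic `wX³ + 3xX²Y + 3yXY² + zY³`. Then `Ĝ(1,a,b,c)` is
`ℓ₁³ + 2ℓ₂³ + ℓ₃³` with `ℓ₁ = X + aY`, `ℓ₂ = aX + bY`, `ℓ₃ = bX + cY`; write `Dᵢⱼ` for the
determinant of `ℓᵢ` and `ℓⱼ`, so that `D = D₁₃`.

If the cubic is degenerate and `x`, `y` do not both vanish, its Hessian
`2D₁₂²ℓ₁ℓ₂ + D₁₃²ℓ₁ℓ₃ + 2D₂₃²ℓ₂ℓ₃` is zero. Since 2 is not a rational cube, this forces `D = 0`.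

If `x = y = 0` or `x = z = 0`, eliminating `a` gives a relation between `ab` and `c`. Substituting
`ab = c - (c + 1)² / k` turns it into `(c + 1)² Q(c) = 0`, where `Q` has few rational roots.

In the remaining cases `w + y = x + z = 0`. For homogeneous integral coordinates `[d,a,b,c]`, which
we take coprime, R and these equations modulo 2 make all four odd. A syzygy gives
`M (cd - ab) = N (c + d)²`, and modulo 16 it turns out that `M = 8` and `N = 0`. Hence `M - kN ≠ 0`
annihilates `(c + d)²`, and again `D = 0`. -/

theorem condR_iff_exists_sq_eq {a b c : ℚ} :
    condR a b c ↔ ∃ k : ℕ, k ≤ 4 ∧ (c + 1) ^ 2 = k * (c - a * b) := by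
  constructor
  · rintro (h | h | h | h | h)
    · exact ⟨0, by norm_num, by push_cast; linear_combination (c + 1) * h⟩
    · exact ⟨1, by norm_num, by push_cast; linear_combination h⟩
    · exact ⟨2, by norm_num, by push_cast; linear_combination h⟩
    · exact ⟨3, by norm_num, by push_cast; linear_combination h⟩
    · exact ⟨4, by norm_num, by push_cast; linear_combination h⟩
  · rintro ⟨k, hk, h⟩
    unfold condR
    interval_cases k <;> push_cast at h
    · exact Or.inl (pow_eq_zero_iff two_ne_zero |>.mp (by linear_combination h))
    · exact Or.inr (Or.inl (by linear_combination h))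
    · exact Or.inr (Or.inr (Or.inl (by linear_combination h)))
    · exact Or.inr (Or.inr (Or.inr (Or.inl (by linear_combination h))))
    · exact Or.inr (Or.inr (Or.inr (Or.inr (by linear_combination h))))

theorem pow_three_ne_two (a : ℚ) : a ^ 3 ≠ 2 := by
  intro h
  have hval := congrArg (padicValRat 2) h
  have htwo : padicValRat 2 (2 : ℚ) = 1 := by
    exact_mod_cast padicValRat.self (p := 2) one_lt_two
  rw [padicValRat.pow, htwo] at hval
  omega

theorem pow_three_inj {R : Type*} [Ring R] [LinearOrder R] [IsStrictOrderedRing R] {a b : R} :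
    a ^ 3 = b ^ 3 ↔ a = b :=
  Odd.pow_inj (by decide)

theorem rat_quadratic_ne_zero {a b c : ℚ} (h : ¬IsSquare (discrim a b c)) (x : ℚ) :
    a * (x * x) + b * x + c ≠ 0 :=
  quadratic_ne_zero_of_discrim_ne_sq (fun s hs => h ⟨s, hs.trans (sq s)⟩) x

section PrimitiveVectors

variable {ι : Type*} [Fintype ι]

theorem exists_primitive_int_multiple {v : ι → ℚ} (hv : v ≠ 0) :
    ∃ (t : ℚ) (n : ι → ℤ), t ≠ 0 ∧ (∀ i, (n i : ℚ) = t * v i) ∧ Finset.univ.gcd n = 1 := by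
  obtain ⟨i, hi⟩ := Function.ne_iff.mp hv
  obtain ⟨m, hm⟩ := IsLocalization.exist_integer_multiples (nonZeroDivisors ℤ) Finset.univ v
  choose! N hN using hm
  have hNv (j : ι) : (N j : ℚ) = (m : ℤ) * v j := by
    simpa [Submonoid.smul_def] using hN j (Finset.mem_univ j)
  have hm0 : ((m : ℤ) : ℚ) ≠ 0 := by exact_mod_cast nonZeroDivisors.coe_ne_zero m
  obtain ⟨n, hn, hgcd⟩ := Finset.extract_gcd N ⟨i, Finset.mem_univ i⟩
  have hNn (j : ι) : (N j : ℚ) = ((Finset.univ.gcd N : ℤ) : ℚ) * n j := by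
    exact_mod_cast hn j (Finset.mem_univ j)
  have hg : ((Finset.univ.gcd N : ℤ) : ℚ) ≠ 0 :=
    left_ne_zero_of_mul (hNn i ▸ hNv i ▸ mul_ne_zero hm0 hi)
  refine ⟨(m : ℤ) / (Finset.univ.gcd N : ℤ), n, div_ne_zero hm0 hg, fun j => ?_, hgcd⟩
  rw [div_mul_eq_mul_div, eq_div_iff hg]
  linear_combination hNv j - hNn j

theorem exists_intCast_zmod_ne_zero {n : ι → ℤ} (hn : Finset.univ.gcd n = 1) (p : ℕ)
    [Fact p.Prime] : ∃ i, (n i : ZMod p) ≠ 0 := by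
  by_contra! h
  have hp : (p : ℤ) ∣ Finset.univ.gcd n :=
    Finset.dvd_gcd fun i _ => (ZMod.intCast_zmod_eq_zero_iff_dvd _ _).mp (h i)
  rw [hn] at hp
  exact (Fact.out : p.Prime).one_lt.ne' (by exact_mod_cast Int.eq_one_of_dvd_one (by simp) hp)

end PrimitiveVectors

section Harmonic

variable {R : Type*} [CommRing R]

/-- The signature `[w,x,y,z]` that `Ĝ` produces from `[d,a,b,c]` satisfies `w + y = 0` and
`x + z = 0`, that is, the binary cubic `wX³ + 3xX²Y + 3yXY² + zY³` is harmonic. -/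
def IsHarmonic (d a b c : R) : Prop :=
  d * (d ^ 2 + a ^ 2) + 2 * a * (a ^ 2 + b ^ 2) + b * (b ^ 2 + c ^ 2) = 0 ∧
    a * (d ^ 2 + a ^ 2) + 2 * b * (a ^ 2 + b ^ 2) + c * (b ^ 2 + c ^ 2) = 0

/-- The coefficient `M` in the relation `M (cd - ab) = N (c + d)²` that holds for harmonic
`Ĝ(d,a,b,c)`; see `IsHarmonic.leftCoeff_mul_eq`. -/
def leftCoeff (d a b c : R) : R :=
  (d - c) * (a ^ 2 + b ^ 2 + (a + d) * (b + c)) +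
    (b - a) * (4 * (a ^ 2 + b ^ 2) + 2 * c * d - (a + c) * (b + d))

/-- The coefficient `N` in the relation `M (cd - ab) = N (c + d)²` that holds for harmonic
`Ĝ(d,a,b,c)`; see `IsHarmonic.leftCoeff_mul_eq`. -/
def rightCoeff (d a b c : R) : R :=
  2 * (a ^ 2 + b ^ 2) * (b + d - a - c)

namespace IsHarmonic

instance [DecidableEq R] (d a b c : R) : Decidable (IsHarmonic d a b c) :=
  inferInstanceAs (Decidable (_ ∧ _))

variable {d a b c : R}

theorem leftCoeff_mul_eq (h : IsHarmonic d a b c) :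
    leftCoeff d a b c * (c * d - a * b) = rightCoeff d a b c * (c + d) ^ 2 := by
  obtain ⟨hwy, hxz⟩ := h
  unfold leftCoeff rightCoeff
  linear_combination (c ^ 2 + b * c - 2 * b ^ 2 - a ^ 2 + a * d) * hwy
    - (d ^ 2 + a * d - 2 * a ^ 2 - b ^ 2 + b * c) * hxz

theorem map {S : Type*} [CommRing S] (f : R →+* S) (h : IsHarmonic d a b c) :
    IsHarmonic (f d) (f a) (f b) (f c) := by
  simpa [IsHarmonic, map_ofNat] using And.intro (congrArg f h.1) (congrArg f h.2)

theorem mul_left (t : R) (h : IsHarmonic d a b c) :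
    IsHarmonic (t * d) (t * a) (t * b) (t * c) :=
  ⟨by linear_combination t ^ 3 * h.1, by linear_combination t ^ 3 * h.2⟩

theorem eq_one_zmod_two : ∀ {d a b c k : ZMod 2}, IsHarmonic d a b c →
    (c + d) ^ 2 = k * (c * d - a * b) → ![d, a, b, c] ≠ 0 → d = 1 ∧ a = 1 ∧ b = 1 ∧ c = 1 := by
  decide

set_option synthInstance.maxSize 1024 in
-- `8 * n = 8` says that `n` is odd.
theorem coeff_zmod_sixteen : ∀ {d : ZMod 16}, 8 * d = 8 → ∀ {a : ZMod 16}, 8 * a = 8 →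
    ∀ {b : ZMod 16}, 8 * b = 8 → ∀ {c : ZMod 16}, 8 * c = 8 → IsHarmonic d a b c →
      ∀ {k : ZMod 16}, (c + d) ^ 2 = k * (c * d - a * b) →
        leftCoeff d a b c = 8 ∧ rightCoeff d a b c = 0 := by
  decide +kernel

theorem coeff_intCast_zmod_sixteen {d a b c k : ℤ} (h : IsHarmonic d a b c)
    (hR : (c + d) ^ 2 = k * (c * d - a * b)) (hd : Odd d) (ha : Odd a) (hb : Odd b) (hc : Odd c) :
    ((leftCoeff d a b c : ℤ) : ZMod 16) = 8 ∧ ((rightCoeff d a b c : ℤ) : ZMod 16) = 0 := by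
  have eight_mul {n : ℤ} (hn : Odd n) : 8 * (n : ZMod 16) = 8 := by
    obtain ⟨m, rfl⟩ := hn
    have h16 : (16 : ZMod 16) = 0 := by decide
    push_cast
    linear_combination (m : ZMod 16) * h16
  have hR16 := congrArg (Int.cast : ℤ → ZMod 16) hR
  push_cast at hR16
  have hcoeff := coeff_zmod_sixteen (eight_mul hd) (eight_mul ha) (eight_mul hb) (eight_mul hc)
    (h.map (Int.castRingHom (ZMod 16))) hR16
  simpa [leftCoeff, rightCoeff] using hcoeff

theorem add_eq_zero_and_det_eq_zero_of_int {d a b c k : ℤ} (h : IsHarmonic d a b c)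
    (hR : (c + d) ^ 2 = k * (c * d - a * b)) (hprim : ![(d : ZMod 2), a, b, c] ≠ 0) :
    c + d = 0 ∧ c * d - a * b = 0 := by
  have hR2 := congrArg (Int.cast : ℤ → ZMod 2) hR
  push_cast at hR2
  obtain ⟨hd, ha, hb, hc⟩ := eq_one_zmod_two (h.map (Int.castRingHom (ZMod 2))) hR2 hprim
  obtain ⟨hleft, hright⟩ := h.coeff_intCast_zmod_sixteen hR
    (ZMod.intCast_eq_one_iff_odd.mp hd) (ZMod.intCast_eq_one_iff_odd.mp ha)
    (ZMod.intCast_eq_one_iff_odd.mp hb) (ZMod.intCast_eq_one_iff_odd.mp hc)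
  have h8 : (8 : ZMod 16) ≠ 0 := by decide
  have hM : leftCoeff d a b c ≠ 0 := fun h0 => h8 (by rw [← hleft, h0, Int.cast_zero])
  have hMN : leftCoeff d a b c - k * rightCoeff d a b c ≠ 0 := fun h0 => h8 <| by
    have := congrArg (Int.cast : ℤ → ZMod 16) h0
    push_cast at this
    rwa [hleft, hright, mul_zero, sub_zero] at this
  have hsq : (leftCoeff d a b c - k * rightCoeff d a b c) * (c + d) ^ 2 = 0 := by
    linear_combination leftCoeff d a b c * hR + k * h.leftCoeff_mul_eq
  have he : c + d = 0 := pow_eq_zero_iff two_ne_zero |>.mp ((mul_eq_zero_iff_left hMN).mp hsq)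
  refine ⟨he, (mul_eq_zero_iff_left hM).mp ?_⟩
  rw [h.leftCoeff_mul_eq, he, zero_pow two_ne_zero, mul_zero]

theorem add_one_eq_zero_and_det_eq_zero_of_rat {a b c : ℚ} {k : ℤ} (h : IsHarmonic 1 a b c)
    (hR : (c + 1) ^ 2 = k * (c - a * b)) : c + 1 = 0 ∧ c - a * b = 0 := by
  obtain ⟨t, n, ht, hn, hgcd⟩ := exists_primitive_int_multiple (v := ![1, a, b, c])
    (Function.ne_iff.mpr ⟨0, one_ne_zero⟩)
  have hn0 : (n 0 : ℚ) = t * 1 := hn 0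
  have hn1 : (n 1 : ℚ) = t * a := hn 1
  have hn2 : (n 2 : ℚ) = t * b := hn 2
  have hn3 : (n 3 : ℚ) = t * c := hn 3
  have hint : IsHarmonic (n 0) (n 1) (n 2) (n 3) := by
    have := h.mul_left t
    rw [← hn0, ← hn1, ← hn2, ← hn3] at this
    unfold IsHarmonic at this ⊢
    exact_mod_cast this
  have hRint : (n 3 + n 0) ^ 2 = k * (n 3 * n 0 - n 1 * n 2) := by
    have : (n 3 + n 0 : ℚ) ^ 2 = k * (n 3 * n 0 - n 1 * n 2) := by
      rw [hn0, hn1, hn2, hn3]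
      linear_combination t ^ 2 * hR
    exact_mod_cast this
  have hprim : ![(n 0 : ZMod 2), n 1, n 2, n 3] ≠ 0 := by
    obtain ⟨i, hi⟩ := exists_intCast_zmod_ne_zero hgcd 2
    exact Function.ne_iff.mpr ⟨i, by fin_cases i <;> exact hi⟩
  obtain ⟨he, hD⟩ := hint.add_eq_zero_and_det_eq_zero_of_int hRint hprim
  have heq : t * (c + 1) = 0 := by
    rw [mul_add, ← hn0, ← hn3]; exact_mod_cast he
  have hDq : t ^ 2 * (c - a * b) = 0 := by
    have : (n 3 * n 0 - n 1 * n 2 : ℚ) = 0 := by exact_mod_cast hD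
    rw [hn0, hn1, hn2, hn3] at this
    linear_combination this
  exact ⟨(mul_eq_zero_iff_left ht).mp heq, (mul_eq_zero_iff_left (pow_ne_zero 2 ht)).mp hDq⟩

theorem eq_of_rat {a b c : ℚ} {k : ℤ} (h : IsHarmonic 1 a b c)
    (hR : (c + 1) ^ 2 = k * (c - a * b)) : a = -1 ∧ b = 1 ∧ c = -1 := by
  obtain ⟨he, hD⟩ := h.add_one_eq_zero_and_det_eq_zero_of_rat hR
  obtain ⟨hwy, hxz⟩ := h
  have hab : a * b = -1 := by linear_combination he - hD
  have hpos : a ^ 2 + b ^ 2 ≠ 0 := by nlinarith [sq_nonneg (a - b), sq_nonneg (a + b)]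
  have hb : b - a ^ 2 = 0 := (mul_eq_zero_iff_left hpos).mp <| by
    linear_combination (hxz - a * hwy - (b ^ 2 + c ^ 2) * hD) / 2
  have ha : a = -1 := pow_three_inj.mp (by linear_combination hab - a * hb)
  exact ⟨ha, by rw [ha] at hb; linear_combination hb, by linear_combination he⟩

end IsHarmonic

end Harmonic

theorem two_mul_pow_three_add_ne_zero {a b : ℚ} (ha : a ≠ 0) : 2 * a ^ 3 + b ^ 3 ≠ 0 := fun h =>
  pow_three_ne_two (-b / a) <| by
    rw [div_pow, div_eq_iff (pow_ne_zero 3 ha)]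
    linear_combination -h

theorem cases_of_x_y_relation {p c : ℚ} {k : ℕ} (hc : c ≠ 0) (hk : k ≤ 4)
    (hR : (c + 1) ^ 2 = k * (c - p)) (h : (2 * p + c ^ 2) * (1 + 2 * p) = p * c) :
    (c = -1 ∧ p = -1) ∨ (c = -1 ∧ p = -1 / 4) ∨ (c = 2 ∧ p = -1) ∨ (c = 1 / 2 ∧ p = -1 / 4) := by
  rcases eq_or_ne (c + 1) 0 with he | he
  · obtain rfl : c = -1 := eq_neg_of_add_eq_zero_left he
    have : (p + 1) * (4 * p + 1) = 0 := by linear_combination h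
    rcases mul_eq_zero.mp this with h | h
    · exact Or.inl ⟨rfl, by linear_combination h⟩
    · exact Or.inr (Or.inl ⟨rfl, by linear_combination h / 4⟩)
  have hsq : (c + 1) ^ 2 ≠ 0 := pow_ne_zero 2 he
  interval_cases k <;> push_cast at hR
  · exact absurd (by linear_combination hR) hsq
  · obtain rfl : p = -(c ^ 2 + c + 1) := by linear_combination hR
    exact absurd ((mul_eq_zero_iff_left hsq).mp (by linear_combination h))
      (rat_quadratic_ne_zero (a := 2) (b := 3) (c := 2) (by norm_num [discrim]) c)
  · obtain rfl : p = -(c ^ 2 + 1) / 2 := by linear_combination hR / 2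
    exact absurd ((mul_eq_zero_iff_left hsq).mp (by linear_combination 2 * h)) hc
  · obtain rfl : p = -(c ^ 2 - c + 1) / 3 := by linear_combination hR / 3
    have : (c - 2) * (2 * c - 1) = 0 := (mul_eq_zero_iff_left hsq).mp (by linear_combination -9 * h)
    rcases mul_eq_zero.mp this with h | h
    · obtain rfl : c = 2 := by linear_combination h
      norm_num
    · obtain rfl : c = 1 / 2 := by linear_combination h / 2
      norm_num
  · obtain rfl : p = -(c - 1) ^ 2 / 4 := by linear_combination hR / 4
    exact absurd ((mul_eq_zero_iff_left hsq).mp (by linear_combination -4 * h))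
      (rat_quadratic_ne_zero (a := 1) (b := -3) (c := 1) (by norm_num [discrim]) c)

theorem quartic_ne_zero (c : ℚ) : 7 * c ^ 4 - 22 * c ^ 3 + 13 * c ^ 2 - 2 ≠ 0 := by
  intro h
  obtain ⟨t, n, -, hn, hgcd⟩ := exists_primitive_int_multiple (v := ![1, c])
    (Function.ne_iff.mpr ⟨0, one_ne_zero⟩)
  have hn0 : (n 0 : ℚ) = t * 1 := hn 0
  have hn1 : (n 1 : ℚ) = t * c := hn 1
  have hint : 7 * n 1 ^ 4 - 22 * n 1 ^ 3 * n 0 + 13 * n 1 ^ 2 * n 0 ^ 2 - 2 * n 0 ^ 4 = 0 := by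
    have : (7 * n 1 ^ 4 - 22 * n 1 ^ 3 * n 0 + 13 * n 1 ^ 2 * n 0 ^ 2 - 2 * n 0 ^ 4 : ℚ) = 0 := by
      rw [hn0, hn1]
      linear_combination t ^ 4 * h
    exact_mod_cast this
  have hmod := congrArg (Int.cast : ℤ → ZMod 3) hint
  push_cast at hmod
  have no_zero : ∀ x y : ZMod 3,
      7 * y ^ 4 - 22 * y ^ 3 * x + 13 * y ^ 2 * x ^ 2 - 2 * x ^ 4 = 0 → x = 0 ∧ y = 0 := by
    decide
  obtain ⟨i, hi⟩ := exists_intCast_zmod_ne_zero hgcd 3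
  fin_cases i
  · exact hi (no_zero _ _ hmod).1
  · exact hi (no_zero _ _ hmod).2

theorem cases_of_x_z_relation {p c : ℚ} {k : ℕ} (hc : c ≠ 0) (hk : k ≤ 4)
    (hR : (c + 1) ^ 2 = k * (c - p))
    (h : p ^ 2 * c ^ 2 + 2 * p * (1 + 2 * p) ^ 2 = c ^ 4 * (1 + 2 * p)) :
    p = -1 ∧ (c = -1 ∨ c = 1) := by
  rcases eq_or_ne (c + 1) 0 with he | he
  · obtain rfl : c = -1 := eq_neg_of_add_eq_zero_left he
    have hp : (8 * (p * p) + 1 * p + -1) * (p + 1) = 0 := by linear_combination h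
    have : 8 * (p * p) + 1 * p + -1 ≠ 0 := rat_quadratic_ne_zero (by norm_num [discrim]) p
    exact ⟨eq_neg_of_add_eq_zero_left ((mul_eq_zero_iff_left this).mp hp), Or.inl rfl⟩
  have hsq : (c + 1) ^ 2 ≠ 0 := pow_ne_zero 2 he
  interval_cases k <;> push_cast at hR
  · exact absurd (by linear_combination hR) hsq
  · obtain rfl : p = -(c ^ 2 + c + 1) := by linear_combination hR
    exact absurd ((mul_eq_zero_iff_left hsq).mp (by linear_combination -h))
      (rat_quadratic_ne_zero (a := 5) (b := 6) (c := 2) (by norm_num [discrim]) (c ^ 2 + c))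
  · obtain rfl : p = -(c ^ 2 + 1) / 2 := by linear_combination hR / 2
    have : c ^ 2 * (c - 1) ^ 2 = 0 := (mul_eq_zero_iff_left hsq).mp (by linear_combination 4 * h)
    obtain rfl : c = 1 := by simpa [hc, sub_eq_zero] using this
    norm_num
  · obtain rfl : p = -(c ^ 2 - c + 1) / 3 := by linear_combination hR / 3
    exact absurd ((mul_eq_zero_iff_left hsq).mp (by linear_combination 27 * h))
      (rat_quadratic_ne_zero (a := 13) (b := 2) (c := -2) (by norm_num [discrim]) (c ^ 2 - c))
  · obtain rfl : p = -(c - 1) ^ 2 / 4 := by linear_combination hR / 4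
    exact absurd ((mul_eq_zero_iff_left hsq).mp (by linear_combination 16 * h)) (quartic_ne_zero c)

theorem eq_zero_or_mul_eq_mul_of_degenerate {R : Type*} [CommRing R] [IsDomain R] {w x y z : R}
    (hx : x ^ 2 = w * y) (hy : y ^ 2 = x * z) : (x = 0 ∧ y = 0) ∨ w * z = x * y := by
  rcases eq_or_ne x 0 with rfl | hx0
  · exact Or.inl ⟨rfl, by simpa using hy⟩
  rcases eq_or_ne y 0 with rfl | hy0
  · exact absurd (by simpa using hx) hx0
  exact Or.inr <| mul_right_cancel₀ (mul_ne_zero hx0 hy0) <| by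
    linear_combination -w * y * hy - y ^ 2 * hx

section Ghat

variable {a b c w x y z : ℚ} {k : ℕ}

theorem hessian_Ghat (hG : Ghat (1, a, b, c) = (w, x, y, z)) :
    w * y - x ^ 2 = 2 * a * (b - a ^ 2) ^ 2 + b * (c - a * b) ^ 2 +
      2 * a * b * (a * c - b ^ 2) ^ 2 ∧
    w * z - x * y = 2 * (b + a ^ 2) * (b - a ^ 2) ^ 2 + (c + a * b) * (c - a * b) ^ 2 +
      2 * (a * c + b ^ 2) * (a * c - b ^ 2) ^ 2 ∧
    x * z - y ^ 2 = 2 * a * b * (b - a ^ 2) ^ 2 + a * c * (c - a * b) ^ 2 +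
      2 * b * c * (a * c - b ^ 2) ^ 2 := by
  simp only [Ghat, Prod.mk.injEq] at hG
  obtain ⟨rfl, rfl, rfl, rfl⟩ := hG
  refine ⟨?_, ?_, ?_⟩ <;> ring

theorem det_eq_zero_of_degenerate (ha : a ≠ 0) (hG : Ghat (1, a, b, c) = (w, x, y, z))
    (hxw : x ^ 2 = w * y) (hyz : y ^ 2 = x * z) (hwz : w * z = x * y) :
    c = a * b ∧ (b = a ^ 2 ∨ b = -1) := by
  obtain ⟨hXX, hXY, hYY⟩ := hessian_Ghat hG
  rw [hxw, sub_self] at hXX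
  rw [hwz, sub_self] at hXY
  rw [hyz, sub_self] at hYY
  have of_D₁₂ (h₁₂ : b - a ^ 2 = 0) : c = a * b := by
    obtain rfl : b = a ^ 2 := sub_eq_zero.mp h₁₂
    have hmul : a ^ 2 * (2 * a ^ 3 + 1 ^ 3) * (c - a * a ^ 2) ^ 2 = 0 := by
      linear_combination -hXX
    have hne : a ^ 2 * (2 * a ^ 3 + 1 ^ 3) ≠ 0 :=
      mul_ne_zero (pow_ne_zero 2 ha) (two_mul_pow_three_add_ne_zero ha)
    exact sub_eq_zero.mp <| pow_eq_zero_iff two_ne_zero |>.mp <|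
      (mul_eq_zero_iff_left hne).mp hmul
  -- The Hessian at the zero `(-a, 1)` of `ℓ₁`.
  have hprod : 2 * ((b - a ^ 2) * (c - a * b) * (a * c - b ^ 2) ^ 2) = 0 := by
    linear_combination -a ^ 2 * hXX + a * hXY - hYY
  simp only [mul_eq_zero, two_ne_zero, false_or, ne_eq, not_false_eq_true, pow_eq_zero_iff]
    at hprod
  rcases hprod with (h₁₂ | h₁₃) | h₂₃
  · exact ⟨of_D₁₂ h₁₂, Or.inl (sub_eq_zero.mp h₁₂)⟩
  · obtain rfl : c = a * b := sub_eq_zero.mp h₁₃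
    have hmul : 2 * a * (b - a ^ 2) ^ 2 * (b ^ 3 - (-1) ^ 3) = 0 := by linear_combination -hXX
    rcases mul_eq_zero.mp hmul with h | h
    · exact ⟨rfl, Or.inl (by simpa [ha, sub_eq_zero] using h)⟩
    · exact ⟨rfl, Or.inr (pow_three_inj.mp (sub_eq_zero.mp h))⟩
  · have h₁₃ : a * (c - a * b) = b * (b - a ^ 2) := by linear_combination h₂₃
    have hmul : (2 * a ^ 3 + b ^ 3) * (b - a ^ 2) ^ 2 = 0 := by
      linear_combination -a ^ 2 * hXX - b * (a * (c - a * b) + b * (b - a ^ 2)) * h₁₃ -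
        2 * a ^ 3 * b * (a * c - b ^ 2) * h₂₃
    have h₁₂ : b - a ^ 2 = 0 := by
      simpa [two_mul_pow_three_add_ne_zero ha] using hmul
    exact ⟨of_D₁₂ h₁₂, Or.inl (sub_eq_zero.mp h₁₂)⟩

theorem eq_of_degenerate (ha : a ≠ 0) (hG : Ghat (1, a, b, c) = (w, x, y, z))
    (hR : (c + 1) ^ 2 = k * (c - a * b)) (hxw : x ^ 2 = w * y) (hyz : y ^ 2 = x * z)
    (hwz : w * z = x * y) : (a, b, c) = (-1, 1, -1) ∨ (a, b, c) = (1, -1, -1) := by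
  obtain ⟨hD, hb⟩ := det_eq_zero_of_degenerate ha hG hxw hyz hwz
  rw [← hD, sub_self, mul_zero] at hR
  have hc : c = -1 := eq_neg_of_add_eq_zero_left (pow_eq_zero_iff two_ne_zero |>.mp hR)
  rcases hb with rfl | rfl
  · obtain rfl : a = -1 := pow_three_inj.mp (by linear_combination hc - hD)
    rw [hc, neg_one_sq]
    exact Or.inl rfl
  · obtain rfl : a = 1 := by linear_combination hD - hc
    exact Or.inr (by rw [hc])

theorem eq_of_x_y_eq_zero (hab : a * b ≠ 0) (hc : c ≠ 0) (hk : k ≤ 4)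
    (hR : (c + 1) ^ 2 = k * (c - a * b)) (hG : Ghat (1, a, b, c) = (w, 0, 0, z)) :
    (a, b, c) = (-1, 1, -1) ∨ (a, b, c) = (1 / 2, -1 / 2, -1) := by
  have ha : a ≠ 0 := left_ne_zero_of_mul hab
  simp only [Ghat, Prod.mk.injEq] at hG
  obtain ⟨-, hx, hy, -⟩ := hG
  have hcube : a ^ 3 = -(a * b) * (2 * (a * b) + c ^ 2) := by linear_combination a * hy
  have hrel : (2 * (a * b) + c ^ 2) * (1 + 2 * (a * b)) = a * b * c :=
    mul_left_cancel₀ hab <| by linear_combination a * (1 + 2 * a * b) * hy - a ^ 2 * hx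
  rcases cases_of_x_y_relation hc hk hR hrel with ⟨rfl, hp⟩ | ⟨rfl, hp⟩ | ⟨rfl, hp⟩ | ⟨rfl, hp⟩ <;>
    rw [hp] at hcube
  · obtain rfl : a = -1 := pow_three_inj.mp (by linear_combination hcube)
    obtain rfl : b = 1 := by linear_combination -hp
    exact Or.inl rfl
  · obtain rfl : a = 1 / 2 := pow_three_inj.mp (by linear_combination hcube)
    obtain rfl : b = -1 / 2 := by linear_combination 2 * hp
    exact Or.inr rfl
  · exact absurd (by linear_combination hcube) (pow_three_ne_two a)
  · exact absurd (by linear_combination 2 * hcube) (two_mul_pow_three_add_ne_zero (b := 1 / 2) ha)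

theorem eq_of_x_z_eq_zero (hab : a * b ≠ 0) (hc : c ≠ 0) (hk : k ≤ 4)
    (hR : (c + 1) ^ 2 = k * (c - a * b)) (hG : Ghat (1, a, b, c) = (w, 0, y, 0)) :
    (a, b, c) = (-1, 1, -1) ∨ (a, b, c) = (1, -1, 1) := by
  simp only [Ghat, Prod.mk.injEq] at hG
  obtain ⟨-, hx, -, hz⟩ := hG
  have hrel : (a * b) ^ 2 * c ^ 2 + 2 * (a * b) * (1 + 2 * (a * b)) ^ 2 =
      c ^ 4 * (1 + 2 * (a * b)) :=
    mul_left_cancel₀ (pow_ne_zero 2 hab) <| by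
      linear_combination a ^ 3 * (1 + 2 * (a * b)) ^ 2 * hz -
        (a ^ 5 * (1 + 2 * a * b) + a ^ 2 * c ^ 3 * (1 + 2 * a * b) - a ^ 4 * b ^ 2 * c) * hx
  obtain ⟨hp, hc1⟩ := cases_of_x_z_relation hc hk hR hrel
  have hac : a ^ 3 = c := by
    linear_combination -a ^ 2 * hx + (2 * a ^ 3 + c * (a * b) - c) * hp
  rcases hc1 with rfl | rfl
  · obtain rfl : a = -1 := pow_three_inj.mp (by linear_combination hac)
    obtain rfl : b = 1 := by linear_combination -hp
    exact Or.inl rfl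
  · obtain rfl : a = 1 := pow_three_inj.mp (by linear_combination hac)
    obtain rfl : b = -1 := by linear_combination hp
    exact Or.inr rfl

theorem isHarmonic_of_Ghat (hG : Ghat (1, a, b, c) = (w, x, y, z)) (hwy : w + y = 0)
    (hxz : x + z = 0) : IsHarmonic 1 a b c := by
  simp only [Ghat, Prod.mk.injEq] at hG
  obtain ⟨rfl, rfl, rfl, rfl⟩ := hG
  exact ⟨by linear_combination hwy, by linear_combination hxz⟩

end Ghat

theorem stmt_16 (a b c : ℚ) (habc : a * b * c ≠ 0)
    (hR : condR a b c)
    (hS : condS (Ghat (1, a, b, c)).1 (Ghat (1, a, b, c)).2.1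
      (Ghat (1, a, b, c)).2.2.1 (Ghat (1, a, b, c)).2.2.2) :
    (a, b, c) = (-1, 1, -1) ∨ (a, b, c) = (1, -1, -1) ∨
    (a, b, c) = (1, -1, 1) ∨ (a, b, c) = (1/2, -1/2, -1) := by
  obtain ⟨hab, hc⟩ := mul_ne_zero_iff.mp habc
  have ha : a ≠ 0 := left_ne_zero_of_mul hab
  obtain ⟨k, hk, hR⟩ := condR_iff_exists_sq_eq.mp hR
  rcases hG : Ghat (1, a, b, c) with ⟨w, x, y, z⟩
  rw [hG] at hS
  change condS w x y z at hS
  have of_x_y (hx : x = 0) (hy : y = 0) := eq_of_x_y_eq_zero hab hc hk hR (hx ▸ hy ▸ hG)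
  have of_harmonic (hwy : w + y = 0) (hxz : x + z = 0) : (a, b, c) = (-1, 1, -1) := by
    obtain ⟨rfl, rfl, rfl⟩ :=
      (isHarmonic_of_Ghat hG hwy hxz).eq_of_rat (k := k) (by exact_mod_cast hR)
    rfl
  rcases hS with ⟨hxw, hyz⟩ | ⟨hx, hy⟩ | ⟨-, hx, hz⟩ | ⟨hwy, hx, hz⟩ | ⟨hwx, hwy, hwz⟩ |
    ⟨hwx, hwy, hwz⟩
  · rcases eq_zero_or_mul_eq_mul_of_degenerate hxw hyz with ⟨hx, hy⟩ | hwz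
    · have := of_x_y hx hy
      tauto
    · have := eq_of_degenerate ha hG hR hxw hyz hwz
      tauto
  · have := of_x_y hx hy
    tauto
  · have := eq_of_x_z_eq_zero hab hc hk hR (hx ▸ hz ▸ hG)
    tauto
  · exact Or.inl (of_harmonic hwy (by rw [hx, hz, add_zero]))
  · exact Or.inl (of_harmonic hwy (by rw [← hwx, hwz]))
  · exact Or.inl (of_harmonic hwy (by rw [← hwz, add_comm, hwx]))
end

section
/- Let a, b, c be rational numbers with a·b·c ≠ 0, let (w,x,y,z) = Ĝ(1,a,b,c) and (w₂,x₂,y₂,z₂) = Ĝ(w,x,y,z), where Ĝ(w,x,y,z) = (w³+2x³+y³, w²x+2x²y+y²z, wx²+2xy²+yz², x³+2y³+z³). Suppose condition R(a,b,c) holds, condition T(w,x,y,z) holds, and condition S(w₂,x₂,y₂,z₂) holds. Then (a,b,c) is one of (−1, 1, −1), (1, −1, −1), (−1, 1, 1), (1, −1, 1), or (1/2, −1/2, −1). -/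
/-!
Write `[w,x,y,z]` for the binary cubic with coefficients `w, 3x, 3y, z`. Then `Ghat` sends it to
`l₀³ + 2 l₁³ + l₂³`, where `l₀ = wu + xv`, `l₁ = xu + yv`, `l₂ = yu + zv`. Conditions R and T say,
apart from the possibilities `w = 0` and `wz = xy` in T, that the eigenvalues of `[[w, x], [y, z]]`
differ by a root of unity which is at most quadratic over `ℚ`, i.e. `tr² = k det` with
`k ∈ {0, 1, 2, 3, 4}`. Condition S is pulled back through `Ghat` twice. At each stage, imposing
`tr² = k det` and eliminating leaves a vanishing binary form over `ℚ`; apart from linear factors,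
which are treated by hand, it has no zero modulo a small prime, hence only the trivial rational one.
-/

section BinaryForm

variable {R S : Type*} [CommRing R] [CommRing S]

/-- The binary form `∑ i, L[i] * u ^ i * v ^ (d - i)` of degree `d = L.length - 1` with integer
coefficients, in Horner form. -/
def binaryForm : List ℤ → R → R → R
  | [], _, _ => 0
  | c :: L, u, v => c * v ^ L.length + u * binaryForm L u v

/-- The form `binaryForm L` has no nontrivial zero in `R`. -/
def IsAnisotropic (L : List ℤ) (R : Type*) [CommRing R] : Prop :=
  ∀ u v : R, binaryForm L u v = 0 → u = 0 ∧ v = 0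

instance (L : List ℤ) [Fintype R] [DecidableEq R] : Decidable (IsAnisotropic L R) :=
  inferInstanceAs (Decidable (∀ _ _ : R, _))

lemma map_binaryForm (f : R →+* S) (L : List ℤ) (u v : R) :
    f (binaryForm L u v) = binaryForm L (f u) (f v) := by
  induction L with
  | nil => simp [binaryForm]
  | cons c L ih => simp [binaryForm, ih]

lemma mul_binaryForm_mul_mul (L : List ℤ) (t u v : R) :
    t * binaryForm L (t * u) (t * v) = t ^ L.length * binaryForm L u v := by
  induction L with
  | nil => simp [binaryForm]
  | cons c L ih =>
    simp only [binaryForm, List.length_cons]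
    linear_combination t * u * ih

lemma exists_eq_mul_isCoprime (u v : ℚ) :
    ∃ (t : ℚ) (r s : ℤ), IsCoprime r s ∧ u = t * r ∧ v = t * s := by
  by_cases hv : v = 0
  · exact ⟨u, 1, 0, isCoprime_one_left, by simp, by simp [hv]⟩
  · refine ⟨v / (u / v).den, (u / v).num, (u / v).den, (u / v).isCoprime_num_den, ?_, ?_⟩
    · rw [div_mul_eq_mul_div, mul_div_assoc, Rat.num_div_den,
        mul_div_cancel₀ _ hv]
    · simp

/-- Reduce a zero with coprime integral coordinates modulo `p`. -/
lemma IsAnisotropic.rat {L : List ℤ} {p : ℕ} (hp : p ≠ 1) (h : IsAnisotropic L (ZMod p)) :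
    IsAnisotropic L ℚ := by
  intro u v huv
  obtain ⟨t, r, s, hrs, rfl, rfl⟩ := exists_eq_mul_isCoprime u v
  suffices t = 0 by simp [this]
  by_contra ht
  have hℚ : binaryForm L (r : ℚ) s = 0 := by
    have := mul_binaryForm_mul_mul L t r s
    rw [huv, mul_zero] at this
    exact (mul_eq_zero.1 this.symm).resolve_left (pow_ne_zero _ ht)
  have hℤ : binaryForm L r s = 0 := by
    have := map_binaryForm (Int.castRingHom ℚ) L r s
    exact Int.cast_injective (α := ℚ) (by simpa [hℚ] using this)
  have hmod : binaryForm L (r : ZMod p) s = 0 := by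
    simpa [hℤ] using (map_binaryForm (Int.castRingHom (ZMod p)) L r s).symm
  obtain ⟨hr, hs⟩ := h _ _ hmod
  rw [ZMod.intCast_zmod_eq_zero_iff_dvd] at hr hs
  exact hp (by simpa using Int.natAbs_of_isUnit (hrs.isUnit_of_dvd' hr hs))

lemma IsAnisotropic.eq_zero_of_mul_eq_zero {L : List ℤ} {p : ℕ} (h : IsAnisotropic L (ZMod p))
    (hp : p ≠ 1) {a u v : ℚ} (hv : v ≠ 0) (hmul : a * binaryForm L u v = 0) : a = 0 :=
  (mul_eq_zero.1 hmul).resolve_right fun huv ↦ hv (h.rat hp u v huv).2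

lemma eq_zero_of_cube_add_two_mul_cube {u v : ℚ} (h : u ^ 3 + 2 * v ^ 3 = 0) : u = 0 ∧ v = 0 := by
  have hF : IsAnisotropic [2, 0, 0, 1] (ZMod 7) := by decide +kernel
  refine hF.rat (by norm_num) u v ?_
  simp only [binaryForm, List.length]
  linear_combination h

end BinaryForm

section Elimination

variable {R : Type*} [CommRing R]

lemma linear_quadratic_resultant_eq_zero {N a₀ a₁ b₀ b₁ b₂ : R} (ha : a₁ * N + a₀ = 0)
    (hb : b₂ * N ^ 2 + b₁ * N + b₀ = 0) : a₁ ^ 2 * b₀ - a₁ * a₀ * b₁ + a₀ ^ 2 * b₂ = 0 := by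
  linear_combination a₁ ^ 2 * hb + (-b₂ * a₁ * N + b₂ * a₀ - b₁ * a₁) * ha

lemma eliminate_sqrt {n J D A B C E : R} (hJ : J ^ 2 = D) (heven : A + n * J * B = 0)
    (hodd : n * C + J * E = 0) : A * E - n ^ 2 * B * C = 0 ∧ D * B * E - A * C = 0 := by
  constructor
  · linear_combination E * heven - n * B * hodd
  · linear_combination -(B * E) * hJ - C * heven + J * B * hodd

end Elimination

section Signature

/-- The binary cubic with coefficients `w, 3x, 3y, z` is a multiple of the cube of a linear form:
the matrix `!![w, x, y; x, y, z]` has rank at most one. -/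
def Degenerate (w x y z : ℚ) : Prop :=
  x ^ 2 = w * y ∧ y ^ 2 = x * z ∧ x * y = w * z

/-- The quotient of the eigenvalues of `!![w, x; y, z]`, when it is defined, is a root of unity
of order `2, 3, 4, 6` or `1`; in terms of trace and determinant, `tr ^ 2 = k * det` with
`k = 0, 1, 2, 3` or `4` respectively. -/
def HasUnityEigenratio (w x y z : ℚ) : Prop :=
  ∃ k ∈ ({0, 1, 2, 3, 4} : Set ℚ), (w + z) ^ 2 = k * (w * z - x * y)

variable {w x y z W X Y Z : ℚ}

lemma Degenerate.reverse (h : Degenerate w x y z) : Degenerate z y x w :=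
  ⟨by linear_combination h.2.1, by linear_combination h.1, by linear_combination h.2.2⟩

lemma HasUnityEigenratio.reverse (h : HasUnityEigenratio w x y z) :
    HasUnityEigenratio z y x w := by
  obtain ⟨k, hk, h⟩ := h
  exact ⟨k, hk, by linear_combination h⟩

lemma condR.hasUnityEigenratio {a b c : ℚ} (h : condR a b c) : HasUnityEigenratio 1 a b c := by
  rcases h with h | h | h | h | h
  · exact ⟨0, by simp, by linear_combination (c + 1) * h⟩
  · exact ⟨1, by simp, by linear_combination h⟩
  · exact ⟨2, by simp, by linear_combination h⟩
  · exact ⟨3, by simp, by linear_combination h⟩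
  · exact ⟨4, by simp, by linear_combination h⟩

lemma condT.eq_zero_or_hasUnityEigenratio_or_det_eq_zero (h : condT w x y z) :
    w = 0 ∨ HasUnityEigenratio w x y z ∨ w * z - x * y = 0 := by
  rcases h with h | h | h | h | h | h
  · rcases mul_eq_zero.1 (show w * (w + z) = 0 by linear_combination h) with hw | hm
    · exact .inl hw
    · exact .inr (.inl ⟨0, by simp, by linear_combination (w + z) * hm⟩)
  · exact .inr (.inl ⟨1, by simp, by linear_combination h⟩)
  · exact .inr (.inl ⟨2, by simp, by linear_combination h⟩)
  · exact .inr (.inl ⟨3, by simp, by linear_combination h⟩)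
  · exact .inr (.inl ⟨4, by simp, by linear_combination h⟩)
  · exact .inr (.inr (by linear_combination -h))

lemma Ghat_eq_iff : Ghat (w, x, y, z) = (W, X, Y, Z) ↔
    w ^ 3 + 2 * x ^ 3 + y ^ 3 = W ∧ w ^ 2 * x + 2 * x ^ 2 * y + y ^ 2 * z = X ∧
      w * x ^ 2 + 2 * x * y ^ 2 + y * z ^ 2 = Y ∧ x ^ 3 + 2 * y ^ 3 + z ^ 3 = Z := by
  simp [Ghat]

lemma Ghat_reverse (h : Ghat (w, x, y, z) = (W, X, Y, Z)) :
    Ghat (z, y, x, w) = (Z, Y, X, W) := by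
  rw [Ghat_eq_iff] at h ⊢
  obtain ⟨hW, hX, hY, hZ⟩ := h
  exact ⟨by linear_combination hZ, by linear_combination hY, by linear_combination hX,
    by linear_combination hW⟩

lemma cube_left_injective : Function.Injective fun u : ℚ ↦ u ^ 3 :=
  (Odd.strictMono_pow (by decide)).injective

end Signature

section DegenerateImage

variable {w x y z W X Y Z : ℚ}

lemma linear_mul_linear_eq_zero {R : Type*} [CommRing R] [NoZeroDivisors R] {a b c d : R}
    (h₀ : a * c = 0) (h₁ : a * d + b * c = 0) (h₂ : b * d = 0) :
    (a = 0 ∧ b = 0) ∨ (c = 0 ∧ d = 0) := by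
  rcases mul_eq_zero.1 h₀ with rfl | rfl <;> rcases mul_eq_zero.1 h₂ with rfl | rfl <;>
    simp_all

/-- By Cauchy-Binet, the Hessian of `∑ cⱼ lⱼ ^ 3` is a multiple of
`∑ cᵢ cⱼ det(lᵢ, lⱼ) ^ 2 lᵢ lⱼ`; these are its coefficients for `Ghat`. -/
lemma Degenerate.hessian_Ghat_eq_zero (h : Degenerate W X Y Z)
    (hG : Ghat (w, x, y, z) = (W, X, Y, Z)) :
    2 * (w * y - x ^ 2) ^ 2 * (w * x) + (w * z - x * y) ^ 2 * (w * y) +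
        2 * (x * z - y ^ 2) ^ 2 * (x * y) = 0 ∧
      2 * (w * y - x ^ 2) ^ 2 * (w * y + x ^ 2) + (w * z - x * y) ^ 2 * (w * z + x * y) +
        2 * (x * z - y ^ 2) ^ 2 * (x * z + y ^ 2) = 0 ∧
      2 * (w * y - x ^ 2) ^ 2 * (x * y) + (w * z - x * y) ^ 2 * (x * z) +
        2 * (x * z - y ^ 2) ^ 2 * (y * z) = 0 := by
  obtain ⟨rfl, rfl, rfl, rfl⟩ := Ghat_eq_iff.1 hG
  obtain ⟨h₁, h₂, h₃⟩ := h
  exact ⟨by linear_combination -h₁, by linear_combination -h₃, by linear_combination -h₂⟩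

lemma Degenerate.of_minors_eq_zero (hp : w * y - x ^ 2 = 0) (hq : w * z - x * y = 0)
    (hr : x * z - y ^ 2 = 0) : Degenerate w x y z :=
  ⟨by linear_combination -hp, by linear_combination -hr, by linear_combination -hq⟩

lemma add_cubes_eq_zero_of_sq_eq_sq {a a' q r α β : ℚ} (hq : q ≠ 0)
    (hpar : (a * r) ^ 2 = (a' * q) ^ 2) (h : α * q ^ 2 * a + β * r ^ 2 * a' = 0) :
    α * a ^ 3 + β * a' ^ 3 = 0 :=
  mul_left_cancel₀ (pow_ne_zero 2 hq) (by linear_combination a ^ 2 * h - β * a' * hpar)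

lemma Degenerate.of_left_minor_eq_zero (h : Degenerate W X Y Z)
    (hG : Ghat (w, x, y, z) = (W, X, Y, Z)) (hp : w * y - x ^ 2 = 0) : Degenerate w x y z := by
  obtain ⟨h₀, h₁, h₂⟩ := h.hessian_Ghat_eq_zero hG
  simp only [hp] at h₀ h₁ h₂
  have hw : w * (x * z - y ^ 2) = x * (w * z - x * y) := by linear_combination -y * hp
  have hx : x * (x * z - y ^ 2) = y * (w * z - x * y) := by linear_combination -z * hp
  generalize hq : w * z - x * y = q at *
  generalize hr : x * z - y ^ 2 = r at *
  by_cases hq₀ : q = 0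
  · refine .of_minors_eq_zero hp (hq.trans hq₀) (hr.trans ?_)
    by_contra hr₀
    obtain rfl : x = 0 := by simpa [hq₀, hr₀] using hx
    obtain rfl : y = 0 := by simpa [hq₀, hr₀] using h₁
    simp_all
  rcases linear_mul_linear_eq_zero (a := y) (b := z)
      (c := 1 * q ^ 2 * w + 2 * r ^ 2 * x) (d := 1 * q ^ 2 * x + 2 * r ^ 2 * y)
      (by linear_combination h₀) (by linear_combination h₁) (by linear_combination h₂)
    with ⟨rfl, rfl⟩ | ⟨hc, hd⟩
  · simp_all
  have hwx := add_cubes_eq_zero_of_sq_eq_sq hq₀ (by rw [hw]) hc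
  have hxy := add_cubes_eq_zero_of_sq_eq_sq hq₀ (by rw [hx]) hd
  rw [one_mul] at hwx hxy
  obtain ⟨rfl, rfl⟩ := eq_zero_of_cube_add_two_mul_cube hwx
  obtain ⟨-, rfl⟩ := eq_zero_of_cube_add_two_mul_cube hxy
  simp [Degenerate]

lemma Degenerate.of_middle_minor_eq_zero (h : Degenerate W X Y Z)
    (hG : Ghat (w, x, y, z) = (W, X, Y, Z)) (hq : w * z - x * y = 0) :
    Degenerate w x y z ∨ (y = -w ∧ z = -x) := by
  obtain ⟨h₀, h₁, h₂⟩ := h.hessian_Ghat_eq_zero hG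
  simp only [hq] at h₀ h₁ h₂
  have hy : y * (w * y - x ^ 2) = -(w * (x * z - y ^ 2)) := by linear_combination x * hq
  have hz : z * (w * y - x ^ 2) = -(x * (x * z - y ^ 2)) := by linear_combination y * hq
  generalize hp : w * y - x ^ 2 = p at *
  generalize hr : x * z - y ^ 2 = r at *
  rcases linear_mul_linear_eq_zero (a := x) (b := y)
      (c := 1 * r ^ 2 * y + 1 * p ^ 2 * w) (d := 1 * r ^ 2 * z + 1 * p ^ 2 * x)
      (by linear_combination h₀ / 2) (by linear_combination h₁ / 2) (by linear_combination h₂ / 2)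
    with ⟨rfl, rfl⟩ | ⟨hc, hd⟩
  · exact .inl (.of_minors_eq_zero (by simp) hq (by simp))
  by_cases hr₀ : r = 0
  · left
    refine .of_minors_eq_zero (hp.trans ?_) hq (hr.trans hr₀)
    by_contra hp₀
    simp_all
  right
  have hyw := add_cubes_eq_zero_of_sq_eq_sq hr₀ (by rw [hy, neg_sq]) hc
  have hzx := add_cubes_eq_zero_of_sq_eq_sq hr₀ (by rw [hz, neg_sq]) hd
  exact ⟨cube_left_injective (by linear_combination hyw),
    cube_left_injective (by linear_combination hzx)⟩

/-- Evaluating the Hessian at the zero of `w * u + x * v` shows that one of the three minors of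
`!![w, x, y; x, y, z]` vanishes. -/
theorem Degenerate.degenerate_or_eq_neg_of_Ghat (h : Degenerate W X Y Z)
    (hG : Ghat (w, x, y, z) = (W, X, Y, Z)) :
    Degenerate w x y z ∨ (y = -w ∧ z = -x) := by
  obtain ⟨h₀, h₁, h₂⟩ := h.hessian_Ghat_eq_zero hG
  have hpqr : (w * y - x ^ 2) * (w * z - x * y) * (x * z - y ^ 2) ^ 2 = 0 := by
    linear_combination (x ^ 2 * h₀ - w * x * h₁ + w ^ 2 * h₂) / 2
  rcases mul_eq_zero.1 hpqr with hpq | hr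
  · rcases mul_eq_zero.1 hpq with hp | hq
    · exact .inl (h.of_left_minor_eq_zero hG hp)
    · exact h.of_middle_minor_eq_zero hG hq
  · refine .inl (h.reverse.of_left_minor_eq_zero (Ghat_reverse hG) ?_).reverse
    linear_combination pow_eq_zero_iff two_ne_zero |>.1 hr

end DegenerateImage

section GeneralizedEqualityImage

variable {w x y z W Z : ℚ}

lemma degenerate_of_add_eq_zero_of_mul_eq_neg_sq (hw : w ≠ 0) (hwz : w + z = 0)
    (hxy : x * y = -w ^ 2) (hX : w ^ 2 * x + 2 * x ^ 2 * y + y ^ 2 * z = 0) :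
    Degenerate w x y z := by
  have hxw : x * w + y ^ 2 = 0 :=
    mul_left_cancel₀ hw (by linear_combination -hX + 2 * x * hxy + y ^ 2 * hwz)
  obtain rfl : y = w := cube_left_injective (by linear_combination y * hxw - w * hxy)
  obtain rfl : x = -y := mul_left_cancel₀ hw (by linear_combination hxw)
  obtain rfl : z = -y := by linear_combination hwz
  exact ⟨by ring, by ring, by ring⟩

lemma mul_eq_zero_of_Ghat_zero_left (hG : Ghat (0, x, y, z) = (W, 0, 0, Z)) : x * y = 0 := by
  obtain ⟨-, hX, hY, -⟩ := Ghat_eq_iff.1 hG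
  by_contra hxy
  have hyx : y ^ 3 + 2 * x ^ 3 = 0 :=
    mul_left_cancel₀ hxy (by linear_combination (x ^ 2 - y * z / 2) * hX + y ^ 2 / 2 * hY)
  exact hxy (by rw [(eq_zero_of_cube_add_two_mul_cube hyx).2, zero_mul])

/-- Multiply the equations `x * (w ^ 2 + 2 * x * y) = -(y ^ 2 * z)` and
`y * (z ^ 2 + 2 * x * y) = -(w * x ^ 2)`. -/
lemma quadratic_eq_zero_of_Ghat_middle_eq_zero (hxy : x * y ≠ 0)
    (hG : Ghat (w, x, y, z) = (W, 0, 0, Z)) :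
    (w * z - x * y) * (w * z - 4 * (x * y)) + 2 * (x * y) * (w + z) ^ 2 = 0 := by
  obtain ⟨-, hX, hY, -⟩ := Ghat_eq_iff.1 hG
  refine mul_left_cancel₀ hxy ?_
  linear_combination (y * z ^ 2 + 2 * x * y ^ 2) * hX - y ^ 2 * z * hY

lemma degenerate_of_Ghat_middle_eq_zero_of_det_eq_zero (hw : w ≠ 0) (hxy : x * y ≠ 0)
    (hG : Ghat (w, x, y, z) = (W, 0, 0, Z)) (hdet : w * z - x * y = 0) :
    Degenerate w x y z := by
  have hquad := quadratic_eq_zero_of_Ghat_middle_eq_zero hxy hG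
  have hm : (w + z) ^ 2 = 0 :=
    mul_left_cancel₀ hxy (by linear_combination hquad / 2 - (w * z - 4 * (x * y)) / 2 * hdet)
  have hm : w + z = 0 := pow_eq_zero_iff two_ne_zero |>.1 hm
  exact degenerate_of_add_eq_zero_of_mul_eq_neg_sq hw hm (by linear_combination -hdet + w * hm)
    (Ghat_eq_iff.1 hG).2.1

lemma eq_half_and_eq_neg_half_of_Ghat_middle_eq_zero (hw : w ≠ 0)
    (hG : Ghat (w, x, y, z) = (W, 0, 0, Z)) (hm : w + z = 0) (hdet : w * z - 4 * (x * y) = 0) :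
    x = w / 2 ∧ y = -(w / 2) := by
  obtain ⟨-, hX, hY, -⟩ := Ghat_eq_iff.1 hG
  obtain rfl : z = -w := by linear_combination hm
  have hxw : 2 * y ^ 2 - x * w = 0 :=
    mul_left_cancel₀ hw (by linear_combination -2 * hX - x * hdet)
  have hyw : 2 * x ^ 2 + y * w = 0 :=
    mul_left_cancel₀ hw (by linear_combination 2 * hY + y * hdet)
  obtain rfl : y = -x := cube_left_injective (by linear_combination (x * hyw + y * hxw) / 2)
  have hx : w = 2 * x := mul_left_cancel₀ hw (by linear_combination -hdet + 2 * hxw)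
  exact ⟨by linear_combination -hx / 2, by linear_combination hx / 2⟩

lemma eq_zero_of_Ghat_middle_eq_zero_of_eq_two_mul (hw : w ≠ 0)
    (hG : Ghat (w, x, y, z) = (W, 0, 0, Z)) (hz : z = 2 * w) (hxy : x * y = -w ^ 2) : x = 0 := by
  obtain ⟨-, hX, hY, -⟩ := Ghat_eq_iff.1 hG
  subst hz
  have hxw : 2 * y ^ 2 - x * w = 0 :=
    mul_left_cancel₀ hw (by linear_combination hX - 2 * x * hxy)
  have hyw : x ^ 2 + 2 * (y * w) = 0 :=
    mul_left_cancel₀ hw (by linear_combination hY - 2 * y * hxy)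
  have hcubes : (2 * y) ^ 3 + 2 * x ^ 3 = 0 := by linear_combination 4 * y * hxw + 2 * x * hyw
  exact (eq_zero_of_cube_add_two_mul_cube hcubes).2

lemma HasUnityEigenratio.degenerate_or_eq_half_of_Ghat_middle_eq_zero
    (hT : HasUnityEigenratio w x y z) (hw : w ≠ 0)
    (hz : z ≠ 0) (hxy : x * y ≠ 0) (hG : Ghat (w, x, y, z) = (W, 0, 0, Z)) :
    Degenerate w x y z ∨ (x = w / 2 ∧ y = -(w / 2) ∧ z = -w) := by
  have hquad := quadratic_eq_zero_of_Ghat_middle_eq_zero hxy hG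
  obtain ⟨k, hk, hT⟩ := hT
  have hfactor : (w * z - x * y) * (w * z - 4 * (x * y) + 2 * k * (x * y)) = 0 := by
    linear_combination hquad - 2 * (x * y) * hT
  rcases mul_eq_zero.1 hfactor with hdet | hdet
  · exact .inl (degenerate_of_Ghat_middle_eq_zero_of_det_eq_zero hw hxy hG hdet)
  rcases hk with rfl | rfl | rfl | rfl | rfl
  · have hm : w + z = 0 := pow_eq_zero_iff two_ne_zero |>.1 (by linear_combination hT)
    obtain ⟨hx, hy⟩ := eq_half_and_eq_neg_half_of_Ghat_middle_eq_zero hw hG hm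
      (by linear_combination hdet)
    exact .inr ⟨hx, hy, by linear_combination hm⟩
  · have hwz : 2 * w ^ 2 + 3 * (w * z) + 2 * z ^ 2 = 0 := by linear_combination 2 * hT + hdet
    nlinarith [hwz, sq_pos_of_ne_zero hw, sq_nonneg (3 * w + 4 * z)]
  · exact absurd (show w * z = 0 by linear_combination hdet) (mul_ne_zero hw hz)
  · have hwz : (z - 2 * w) * (w - 2 * z) = 0 := by linear_combination 3 * hdet - 2 * hT
    rcases mul_eq_zero.1 hwz with hzw | hwz
    · have := eq_zero_of_Ghat_middle_eq_zero_of_eq_two_mul hw hG (by linear_combination hzw)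
        (by linear_combination (hdet - w * hzw) / 2)
      simp [this] at hxy
    · have := eq_zero_of_Ghat_middle_eq_zero_of_eq_two_mul hz (Ghat_reverse hG)
        (by linear_combination hwz) (by linear_combination (hdet - z * hwz) / 2)
      simp [this] at hxy
  · have hF : IsAnisotropic [1, -3, 1] (ZMod 2) := by decide +kernel
    refine absurd (hF.rat (by norm_num) w z ?_).1 hw
    simp only [binaryForm, List.length]
    linear_combination hT - hdet

theorem Ghat_middle_eq_zero_cases (hT : w = 0 ∨ HasUnityEigenratio w x y z ∨ w * z - x * y = 0)
    (hG : Ghat (w, x, y, z) = (W, 0, 0, Z)) :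
    Degenerate w x y z ∨ (x = 0 ∧ z = 0) ∨ (w = 0 ∧ y = 0) ∨ (x = 0 ∧ y = 0) ∨
      (x = w / 2 ∧ y = -(w / 2) ∧ z = -w) := by
  obtain ⟨-, hX, hY, -⟩ := Ghat_eq_iff.1 hG
  by_cases hx : x = 0
  · subst hx
    have hyz : y = 0 ∨ z = 0 := by simpa using hX
    tauto
  by_cases hy : y = 0
  · subst hy
    have hwx : w = 0 ∨ x = 0 := by simpa using hX
    tauto
  have hxy : x * y ≠ 0 := mul_ne_zero hx hy
  have hw : w ≠ 0 := by
    rintro rfl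
    exact hxy (mul_eq_zero_of_Ghat_zero_left hG)
  have hz : z ≠ 0 := by
    rintro rfl
    exact hxy (by rw [mul_comm, mul_eq_zero_of_Ghat_zero_left (Ghat_reverse hG)])
  rcases hT with hw₀ | hT | hdet
  · exact absurd hw₀ hw
  · rcases hT.degenerate_or_eq_half_of_Ghat_middle_eq_zero hw hz hxy hG with h | h
    exacts [.inl h, .inr (.inr (.inr (.inr h)))]
  · exact .inl (degenerate_of_Ghat_middle_eq_zero_of_det_eq_zero hw hxy hG hdet)

end GeneralizedEqualityImage

section AffineImage

variable {w x y z W Y : ℚ}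

/-- Eliminate `x` and `y` from the first and the last component in favour of `x * y`. -/
lemma quadratic_eq_zero_of_Ghat_odd_eq_zero (hG : Ghat (w, x, y, z) = (W, 0, Y, 0)) :
    (x * y) ^ 2 * z ^ 2 + 2 * (x * y) * (w ^ 2 + 2 * (x * y)) ^ 2 -
      z ^ 4 * (w ^ 2 + 2 * (x * y)) = 0 := by
  obtain ⟨-, hX, -, hZ⟩ := Ghat_eq_iff.1 hG
  linear_combination (x ^ 2 * z + 2 * y * (w ^ 2 + 2 * (x * y))) * hX -
    z * (w ^ 2 + 2 * (x * y)) * hZ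

lemma left_ne_zero_of_Ghat_odd_eq_zero (hxy : x * y ≠ 0)
    (hG : Ghat (w, x, y, z) = (W, 0, Y, 0)) : w ≠ 0 := by
  rintro rfl
  have hquad := quadratic_eq_zero_of_Ghat_odd_eq_zero hG
  have hF : IsAnisotropic [8, 1, -2] (ZMod 3) := by decide +kernel
  refine hxy (hF.eq_zero_of_mul_eq_zero (by norm_num) (u := z ^ 2) hxy ?_)
  simp only [binaryForm, List.length]
  linear_combination hquad

lemma right_ne_zero_of_Ghat_odd_eq_zero (hxy : x * y ≠ 0)
    (hG : Ghat (w, x, y, z) = (W, 0, Y, 0)) : z ≠ 0 := by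
  rintro rfl
  obtain ⟨-, -, -, hZ⟩ := Ghat_eq_iff.1 hG
  refine left_ne_zero_of_mul hxy (eq_zero_of_cube_add_two_mul_cube (v := y) ?_).1
  linear_combination hZ

lemma HasUnityEigenratio.mul_eq_neg_sq_of_Ghat_odd_eq_zero (hT : HasUnityEigenratio w x y z)
    (hxy : x * y ≠ 0) (hG : Ghat (w, x, y, z) = (W, 0, Y, 0)) :
    x * y = -w ^ 2 ∧ (w + z = 0 ∨ w = z) := by
  have hw := left_ne_zero_of_Ghat_odd_eq_zero hxy hG
  have hz := right_ne_zero_of_Ghat_odd_eq_zero hxy hG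
  have hquad := quadratic_eq_zero_of_Ghat_odd_eq_zero hG
  obtain ⟨k, hk, hT⟩ := hT
  generalize x * y = p at *
  have of_sq_eq_zero (hm : (w + z) ^ 2 = 0) (hdet : w * z - p = 0) :
      p = -w ^ 2 ∧ (w + z = 0 ∨ w = z) := by
    have hm := pow_eq_zero_iff two_ne_zero |>.1 hm
    exact ⟨by linear_combination w * hm - hdet, .inl hm⟩
  rcases hk with rfl | rfl | rfl | rfl | rfl
  · have hm : w + z = 0 := pow_eq_zero_iff two_ne_zero |>.1 (by linear_combination hT)
    obtain rfl : z = -w := by linear_combination hm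
    have hF : IsAnisotropic [8, 1, -1] (ZMod 5) := by decide +kernel
    have := hF.eq_zero_of_mul_eq_zero (a := p + w ^ 2) (u := w ^ 2) (v := p) (by norm_num) hxy
      (by simp only [binaryForm, List.length]; linear_combination hquad)
    exact ⟨by linear_combination this, .inl hm⟩
  · have hF : IsAnisotropic [2, 6, 11, 10, 5] (ZMod 3) := by decide +kernel
    obtain rfl : p = w * z - (w + z) ^ 2 := by linear_combination hT
    have hm := hF.eq_zero_of_mul_eq_zero (a := (w + z) ^ 2) (u := z) (v := w) (by norm_num) hw
      (by simp only [binaryForm, List.length]; linear_combination -hquad)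
    exact of_sq_eq_zero hm (by linear_combination hm)
  · obtain rfl : p = -(w ^ 2 + z ^ 2) / 2 := by linear_combination hT / 2
    have hwz : (w + z) * (w - z) = 0 := pow_eq_zero_iff two_ne_zero |>.1 <|
      mul_left_cancel₀ (pow_ne_zero 2 hz) (by linear_combination 4 * hquad)
    refine ⟨by linear_combination hwz / 2, ?_⟩
    simpa [sub_eq_zero] using hwz
  · have hF : IsAnisotropic [2, 2, -15, 26, -13] (ZMod 5) := by decide +kernel
    obtain rfl : p = w * z - (w + z) ^ 2 / 3 := by linear_combination hT / 3
    have hm := hF.eq_zero_of_mul_eq_zero (a := (w + z) ^ 2) (u := z) (v := w) (by norm_num) hw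
      (by simp only [binaryForm, List.length]; linear_combination -27 * hquad)
    exact of_sq_eq_zero hm (by linear_combination hm / 3)
  · have hF : IsAnisotropic [2, 0, -13, 22, -7] (ZMod 3) := by decide +kernel
    obtain rfl : p = w * z - (w + z) ^ 2 / 4 := by linear_combination hT / 4
    have hm := hF.eq_zero_of_mul_eq_zero (a := (w + z) ^ 2) (u := z) (v := w) (by norm_num) hw
      (by simp only [binaryForm, List.length]; linear_combination -16 * hquad)
    exact of_sq_eq_zero hm (by linear_combination hm / 4)

lemma add_eq_zero_of_Ghat_odd_eq_zero_of_det_eq_zero (hxy : x * y ≠ 0)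
    (hG : Ghat (w, x, y, z) = (W, 0, Y, 0)) (hdet : w * z - x * y = 0) : w + z = 0 := by
  have hw := left_ne_zero_of_Ghat_odd_eq_zero hxy hG
  have hquad := quadratic_eq_zero_of_Ghat_odd_eq_zero hG
  obtain hp : x * y = w * z := by linear_combination -hdet
  rw [hp] at hxy hquad
  have hF : IsAnisotropic [1, 2, -1] (ZMod 3) := by decide +kernel
  refine pow_eq_zero_iff two_ne_zero |>.1 <|
    hF.eq_zero_of_mul_eq_zero (by norm_num) (u := z) hw (mul_left_cancel₀ hxy ?_)
  simp only [binaryForm, List.length]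
  linear_combination hquad / 2

theorem Ghat_odd_eq_zero_cases (hT : w = 0 ∨ HasUnityEigenratio w x y z ∨ w * z - x * y = 0)
    (hG : Ghat (w, x, y, z) = (W, 0, Y, 0)) :
    Degenerate w x y z ∨ (w = 0 ∧ y = 0) ∨ (x = w ∧ y = -w ∧ z = w) := by
  obtain ⟨-, hX, -, hZ⟩ := Ghat_eq_iff.1 hG
  by_cases hx : x = 0
  · subst hx
    obtain ⟨rfl, rfl⟩ := eq_zero_of_cube_add_two_mul_cube (u := z) (v := y)
      (by linear_combination hZ)
    exact .inl (.of_minors_eq_zero (by simp) (by simp) (by simp))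
  by_cases hy : y = 0
  · subst hy
    have hw : w = 0 := by simpa [hx] using hX
    exact .inr (.inl ⟨hw, rfl⟩)
  have hxy : x * y ≠ 0 := mul_ne_zero hx hy
  have hw := left_ne_zero_of_Ghat_odd_eq_zero hxy hG
  rcases hT with hw₀ | hT | hdet
  · exact absurd hw₀ hw
  · obtain ⟨hp, hm | rfl⟩ := hT.mul_eq_neg_sq_of_Ghat_odd_eq_zero hxy hG
    · exact .inl (degenerate_of_add_eq_zero_of_mul_eq_neg_sq hw hm hp hX)
    · have hxw : x * w - y ^ 2 = 0 :=
        mul_left_cancel₀ hw (by linear_combination -hX + 2 * x * hp)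
      obtain rfl : y = -w := cube_left_injective (by linear_combination w * hp - y * hxw)
      obtain rfl : x = w := mul_left_cancel₀ hw (by linear_combination hxw)
      exact .inr (.inr ⟨rfl, rfl, rfl⟩)
  · have hm := add_eq_zero_of_Ghat_odd_eq_zero_of_det_eq_zero hxy hG hdet
    exact .inl (degenerate_of_add_eq_zero_of_mul_eq_neg_sq hw hm
      (by linear_combination w * hm - hdet) hX)

end AffineImage

section HarmonicImage

variable {w x y z W X Y Z m n i J s : ℚ}

/-- In the coordinates `m = w + z`, `n = w - z`, `i = x + y`, `J = x - y`. Modulo this quadric, the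
even and odd parts of `Ghat` under reversal take the shapes `A + n * J * B` and `n * C + J * E`
with `A, B, C, E` polynomials in `m, i, n ^ 2`, so that `J` can be eliminated. -/
lemma HasUnityEigenratio.exists_quadric
    (h : HasUnityEigenratio ((m + n) / 2) ((i + J) / 2) ((i - J) / 2) ((m - n) / 2))
    (hm : m ≠ 0) : ∃ s ∈ ({3, 1, 1 / 3, 0} : Set ℚ), J ^ 2 = i ^ 2 + n ^ 2 + s * m ^ 2 := by
  obtain ⟨k, hk, h⟩ := h
  rcases hk with rfl | rfl | rfl | rfl | rfl
  · exact absurd (pow_eq_zero_iff two_ne_zero |>.1 (by linear_combination h)) hm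
  · exact ⟨3, by simp, by linear_combination -4 * h⟩
  · exact ⟨1, by simp, by linear_combination -2 * h⟩
  · exact ⟨1 / 3, by simp, by linear_combination -4 / 3 * h⟩
  · exact ⟨0, by simp, by linear_combination -h⟩

lemma exists_half_add_and_half_sub (u v : ℚ) : ∃ a d, u = (a + d) / 2 ∧ v = (a - d) / 2 :=
  ⟨u + v, u - v, by ring, by ring⟩

lemma harmonic_equations_of_Ghat (hD : J ^ 2 = i ^ 2 + n ^ 2 + s * m ^ 2)
    (hG : Ghat ((m + n) / 2, (i + J) / 2, (i - J) / 2, (m - n) / 2) = (W, X, -W, -X)) :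
    (8 * i * n ^ 2 + 4 * m * n ^ 2 + 12 * i ^ 3 + 2 * i ^ 2 * m + (7 * s + 1) * i * m ^ 2 +
        (s + 1) * m ^ 3) + n * J * (2 * (i + m)) = 0 ∧
      n * (2 * n ^ 2 + 2 * i ^ 2 - 2 * i * m + (s + 3) * m ^ 2) +
        J * (2 * n ^ 2 + 4 * i ^ 2 + 2 * i * m + (3 * s - 1) * m ^ 2) = 0 := by
  obtain ⟨hW, hX, hY, hZ⟩ := Ghat_eq_iff.1 hG
  constructor
  · linear_combination 4 * (hW + hX + hY + hZ) - (7 * i + m) * hD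
  · linear_combination 4 * (hW - hX + hY - hZ) - (n + 3 * J) * hD

lemma harmonic_linear_and_quadratic (hD : J ^ 2 = i ^ 2 + n ^ 2 + s * m ^ 2)
    (heven : (8 * i * n ^ 2 + 4 * m * n ^ 2 + 12 * i ^ 3 + 2 * i ^ 2 * m + (7 * s + 1) * i * m ^ 2 +
      (s + 1) * m ^ 3) + n * J * (2 * (i + m)) = 0)
    (hodd : n * (2 * n ^ 2 + 2 * i ^ 2 - 2 * i * m + (s + 3) * m ^ 2) +
      J * (2 * n ^ 2 + 4 * i ^ 2 + 2 * i * m + (3 * s - 1) * m ^ 2) = 0) :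
    (24 * i ^ 3 + 56 * i ^ 2 * m + (24 * s - 16) * i * m ^ 2 + (16 * s - 24) * m ^ 3) * n ^ 2 +
        (32 * i ^ 5 + 64 * i ^ 4 * m + (52 * s - 36) * i ^ 3 * m ^ 2 +
          (52 * s - 4) * i ^ 2 * m ^ 3 + (20 * s ^ 2 - 20 * s) * i * m ^ 4 +
          (8 * s ^ 2 - 4 * s - 4) * m ^ 5) = 0 ∧
      (12 * i + 4 * m) * (n ^ 2) ^ 2 +
        (52 * i ^ 3 + 36 * i ^ 2 * m + 36 * s * i * m ^ 2 + (12 * s - 8) * m ^ 3) * n ^ 2 +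
        (48 * i ^ 5 + 32 * i ^ 4 * m + (64 * s - 4) * i ^ 3 * m ^ 2 +
          (24 * s + 4) * i ^ 2 * m ^ 3 + (21 * s ^ 2 - 2 * s + 1) * i * m ^ 4 +
          (3 * s ^ 2 + 2 * s - 1) * m ^ 5) = 0 := by
  obtain ⟨h₁, h₂⟩ := eliminate_sqrt hD heven hodd
  exact ⟨by linear_combination h₁ + h₂, by linear_combination h₁⟩

lemma add_ne_zero_of_harmonic_equation (hm : m ≠ 0) (hs : 0 ≤ s)
    (heven : (8 * i * n ^ 2 + 4 * m * n ^ 2 + 12 * i ^ 3 + 2 * i ^ 2 * m + (7 * s + 1) * i * m ^ 2 +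
      (s + 1) * m ^ 3) + n * J * (2 * (i + m)) = 0) : i + m ≠ 0 := by
  intro h
  obtain rfl : i = -m := by linear_combination h
  have hprod : m * (4 * n ^ 2 + (10 + 6 * s) * m ^ 2) = 0 := by linear_combination -heven
  exact mul_ne_zero hm (by positivity) hprod

lemma sub_ne_zero_of_harmonic_equation (hm : m ≠ 0) (hD : J ^ 2 = i ^ 2 + n ^ 2 + 1 * m ^ 2)
    (heven : (8 * i * n ^ 2 + 4 * m * n ^ 2 + 12 * i ^ 3 + 2 * i ^ 2 * m + (7 * 1 + 1) * i * m ^ 2 +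
      (1 + 1) * m ^ 3) + n * J * (2 * (i + m)) = 0) : i - m ≠ 0 := by
  intro h
  obtain rfl : i = m := by linear_combination h
  have hnJ : n * J + 3 * (n ^ 2 + 2 * i ^ 2) = 0 :=
    mul_left_cancel₀ hm (by linear_combination heven / 4)
  have hsum : (8 * n ^ 2 + 18 * i ^ 2) * (n ^ 2 + 2 * i ^ 2) = 0 := by
    linear_combination n ^ 2 * hD - (n * J - 3 * (n ^ 2 + 2 * i ^ 2)) * hnJ
  exact (by positivity : (8 * n ^ 2 + 18 * i ^ 2) * (n ^ 2 + 2 * i ^ 2) ≠ 0) hsum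

lemma eq_zero_of_harmonic_equations (hs : s ∈ ({3, 1, 1 / 3, 0} : Set ℚ))
    (hD : J ^ 2 = i ^ 2 + n ^ 2 + s * m ^ 2)
    (heven : (8 * i * n ^ 2 + 4 * m * n ^ 2 + 12 * i ^ 3 + 2 * i ^ 2 * m + (7 * s + 1) * i * m ^ 2 +
      (s + 1) * m ^ 3) + n * J * (2 * (i + m)) = 0)
    (hodd : n * (2 * n ^ 2 + 2 * i ^ 2 - 2 * i * m + (s + 3) * m ^ 2) +
      J * (2 * n ^ 2 + 4 * i ^ 2 + 2 * i * m + (3 * s - 1) * m ^ 2) = 0) : m = 0 := by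
  by_contra hm
  have hs₀ : 0 ≤ s := by rcases hs with rfl | rfl | rfl | rfl <;> norm_num
  have hadd := add_ne_zero_of_harmonic_equation hm hs₀ heven
  obtain ⟨hlin, hquad⟩ := harmonic_linear_and_quadratic hD heven hodd
  have hres := linear_quadratic_resultant_eq_zero hlin hquad
  rcases hs with rfl | rfl | rfl | rfl
  · have hF : IsAnisotropic [13, 20, 27, 24, 15, 4, 1] (ZMod 3) := by decide +kernel
    have := hF.eq_zero_of_mul_eq_zero (a := m ^ 2 * (i + m) ^ 3) (u := i) (by norm_num) hm
      (by simp only [binaryForm, List.length]; linear_combination -hres / 512)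
    simp_all
  · have hF : IsAnisotropic [-1, -3, 9, 3, 9, 15, 7, 1] (ZMod 3) := by decide +kernel
    have hsub := sub_ne_zero_of_harmonic_equation hm hD heven
    have := hF.eq_zero_of_mul_eq_zero (a := m ^ 2 * (i + m) * (i - m)) (u := i) (by norm_num) hm
      (by simp only [binaryForm, List.length]; linear_combination hres / 256)
    simp_all
  · have hF : IsAnisotropic [65, 62, -252, 210, -666, -198, 756, 486, 81] (ZMod 7) := by
      decide +kernel
    have := hF.eq_zero_of_mul_eq_zero (a := m ^ 2 * (i + m)) (u := i) (by norm_num) hm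
      (by simp only [binaryForm, List.length]; linear_combination hres * 81 / 512)
    simp_all
  · have hF : IsAnisotropic [2, 2, 7, 10, -60, -22, 45, 30, 5] (ZMod 17) := by decide +kernel
    have := hF.eq_zero_of_mul_eq_zero (a := m ^ 2 * (i + m)) (u := i) (by norm_num) hm
      (by simp only [binaryForm, List.length]; linear_combination hres / 128)
    simp_all

lemma HasUnityEigenratio.add_eq_zero_of_Ghat_harmonic (h : HasUnityEigenratio w x y z)
    (hG : Ghat (w, x, y, z) = (W, X, -W, -X)) : w + z = 0 := by
  obtain ⟨m, n, rfl, rfl⟩ := exists_half_add_and_half_sub w z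
  obtain ⟨i, J, rfl, rfl⟩ := exists_half_add_and_half_sub x y
  suffices m = 0 by rw [this]; ring
  by_contra hm
  obtain ⟨s, hs, hD⟩ := h.exists_quadric hm
  obtain ⟨heven, hodd⟩ := harmonic_equations_of_Ghat hD hG
  exact hm (eq_zero_of_harmonic_equations hs hD heven hodd)

lemma Degenerate.of_Ghat_harmonic_of_add_eq_zero (hG : Ghat (w, x, y, z) = (W, X, -W, -X))
    (hm : w + z = 0) : Degenerate w x y z := by
  obtain ⟨hW, hX, hY, hZ⟩ := Ghat_eq_iff.1 hG
  obtain rfl : z = -w := by linear_combination hm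
  have hxy : (x + y) * (5 * (x + y) ^ 2 + (2 * w + (x - y)) ^ 2 + 6 * (x - y) ^ 2) = 0 := by
    linear_combination 4 * (hW + hX + hY + hZ)
  have hy : x + y = 0 := by
    by_contra hxy₀
    exact mul_ne_zero hxy₀ (by positivity) hxy
  obtain rfl : y = -x := by linear_combination hy
  have hwx : (w + x) * ((w - x) ^ 2 + 2 * x ^ 2) = 0 := by
    linear_combination (hW - hX + hY - hZ) / 2
  have hwx : w + x = 0 := by
    by_contra hwx₀
    have hsq : (w - x) ^ 2 + 2 * x ^ 2 = 0 := (mul_eq_zero.1 hwx).resolve_left hwx₀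
    nlinarith [sq_pos_of_ne_zero hwx₀, sq_nonneg (w - 2 * x)]
  obtain rfl : w = -x := by linear_combination hwx
  exact ⟨by ring, by ring, by ring⟩

lemma Degenerate.of_Ghat_harmonic_of_left_eq_zero (hG : Ghat (0, x, y, z) = (W, X, -W, -X)) :
    Degenerate 0 x y z := by
  obtain ⟨hW, hX, hY, hZ⟩ := Ghat_eq_iff.1 hG
  have hquad : y * z ^ 2 + 0 * z + (2 * x * (x ^ 2 + y ^ 2) + y ^ 3) = 0 := by
    linear_combination hW + hY
  have hlin : -2 * x * (x ^ 2 + y ^ 2) * z + y * (x ^ 3 + 2 * x ^ 2 * y + 2 * y ^ 3) = 0 := by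
    linear_combination y * (hX + hZ) - z * (hW + hY)
  have hres := linear_quadratic_resultant_eq_zero hlin hquad
  have hF : IsAnisotropic [4, 0, 12, 12, 12, 28, 5, 24, 0, 8] (ZMod 11) := by decide +kernel
  obtain ⟨rfl, rfl⟩ := hF.rat (by norm_num) x y
    (by simp only [binaryForm, List.length]; linear_combination hres)
  simp [Degenerate]

lemma Degenerate.of_Ghat_harmonic_of_det_eq_zero (hG : Ghat (w, x, y, z) = (W, X, -W, -X))
    (hdet : w * z - x * y = 0) : Degenerate w x y z := by
  obtain ⟨hW, hX, hY, hZ⟩ := Ghat_eq_iff.1 hG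
  have hp : (x ^ 2 + y ^ 2) * (w * y - x ^ 2) = 0 := by
    linear_combination -(y ^ 2 + z ^ 2) / 2 * hdet + (w * (hX + hZ) - x * (hW + hY)) / 2
  have hr : (x ^ 2 + y ^ 2) * (x * z - y ^ 2) = 0 := by
    linear_combination -(w ^ 2 + x ^ 2) / 2 * hdet + (z * (hW + hY) - y * (hX + hZ)) / 2
  by_cases hx : x = 0 ∧ y = 0
  · obtain ⟨rfl, rfl⟩ := hx
    exact .of_minors_eq_zero (by simp) hdet (by simp)
  have hxy : x ^ 2 + y ^ 2 ≠ 0 := fun h ↦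
    hx ⟨by nlinarith [sq_nonneg x, sq_nonneg y], by nlinarith [sq_nonneg x, sq_nonneg y]⟩
  exact .of_minors_eq_zero ((mul_eq_zero.1 hp).resolve_left hxy) hdet
    ((mul_eq_zero.1 hr).resolve_left hxy)

theorem Degenerate.of_Ghat_harmonic
    (hT : w = 0 ∨ HasUnityEigenratio w x y z ∨ w * z - x * y = 0)
    (hG : Ghat (w, x, y, z) = (W, X, -W, -X)) : Degenerate w x y z := by
  rcases hT with rfl | hT | hdet
  · exact .of_Ghat_harmonic_of_left_eq_zero hG
  · exact .of_Ghat_harmonic_of_add_eq_zero hG (hT.add_eq_zero_of_Ghat_harmonic hG)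
  · exact .of_Ghat_harmonic_of_det_eq_zero hG hdet

end HarmonicImage

section AntisymmetricMiddleImage

variable {w x y z W X Z m n i J s : ℚ}

lemma antisymmetric_equation_of_Ghat (hD : J ^ 2 = i ^ 2 + n ^ 2 + s * m ^ 2)
    (hG : Ghat ((m + n) / 2, (i + J) / 2, (i - J) / 2, (m - n) / 2) = (W, X, -X, Z)) :
    ((m - i) * n ^ 2 + (2 * i ^ 2 * m + (1 - 2 * s) * i * m ^ 2 + s * m ^ 3)) +
      n * J * (2 * (i + m)) = 0 := by
  obtain ⟨-, hX, hY, -⟩ := Ghat_eq_iff.1 hG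
  linear_combination 4 * (hX + hY) - (m - 2 * i) * hD

lemma two_one_linear_equation_of_Ghat (hD : J ^ 2 = i ^ 2 + n ^ 2 + s * m ^ 2)
    (hG : Ghat ((m + n) / 2, (i + J) / 2, (i - J) / 2, (m - n) / 2) = (W, W / 2, -(W / 2), -W)) :
    (9 * i + 3 * m) * n ^ 2 + (12 * i ^ 3 + 9 * s * i * m ^ 2 + m ^ 3) = 0 := by
  obtain ⟨hW, -, -, hZ⟩ := Ghat_eq_iff.1 hG
  linear_combination 4 * (hW + hZ) - 9 * i * hD

lemma eq_zero_of_two_one_equations (hs : s ∈ ({3, 1, 1 / 3, 0} : Set ℚ))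
    (hD : J ^ 2 = i ^ 2 + n ^ 2 + s * m ^ 2)
    (heven : ((m - i) * n ^ 2 + (2 * i ^ 2 * m + (1 - 2 * s) * i * m ^ 2 + s * m ^ 3)) +
      n * J * (2 * (i + m)) = 0)
    (hlin : (9 * i + 3 * m) * n ^ 2 + (12 * i ^ 3 + 9 * s * i * m ^ 2 + m ^ 3) = 0) : m = 0 := by
  by_contra hm
  have h3im : 3 * i + m ≠ 0 := by
    intro h
    obtain rfl : m = -3 * i := by linear_combination h
    have hi : (3 * s - 5 / 9) * i ^ 3 = 0 := by linear_combination hlin / 27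
    rcases hs with rfl | rfl | rfl | rfl <;> norm_num at hi hm <;> exact hm hi
  have hquad : ((m - i) ^ 2 - 4 * (i + m) ^ 2) * (n ^ 2) ^ 2 +
      (2 * (m - i) * (2 * i ^ 2 * m + (1 - 2 * s) * i * m ^ 2 + s * m ^ 3) -
        4 * (i + m) ^ 2 * (i ^ 2 + s * m ^ 2)) * n ^ 2 +
      (2 * i ^ 2 * m + (1 - 2 * s) * i * m ^ 2 + s * m ^ 3) ^ 2 = 0 := by
    linear_combination 4 * (i + m) ^ 2 * n ^ 2 * hD +
      ((m - i) * n ^ 2 + (2 * i ^ 2 * m + (1 - 2 * s) * i * m ^ 2 + s * m ^ 3) -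
        n * J * (2 * (i + m))) * heven
  have hres := linear_quadratic_resultant_eq_zero hlin hquad
  rcases hs with rfl | rfl | rfl | rfl
  · have hF : IsAnisotropic [6, 8, 9, 0, -3] (ZMod 7) := by decide +kernel
    have := hF.eq_zero_of_mul_eq_zero (a := m ^ 2 * (3 * i + m) ^ 2) (u := i) (by norm_num) hm
      (by simp only [binaryForm, List.length]; linear_combination hres / 16)
    simp_all
  · have hF : IsAnisotropic [3, 2, 9, 0, 6] (ZMod 7) := by decide +kernel
    have := hF.eq_zero_of_mul_eq_zero (a := m ^ 2 * (3 * i + m) ^ 2) (u := i) (by norm_num) hm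
      (by simp only [binaryForm, List.length]; linear_combination hres / 4)
    simp_all
  · have hi : i ≠ 0 := by
      rintro rfl
      have hprod : m * (3 * n ^ 2 + m ^ 2) = 0 := by linear_combination hlin
      exact mul_ne_zero hm (by positivity) hprod
    have hF : IsAnisotropic [1, 0, 3] (ZMod 5) := by decide +kernel
    have := hF.eq_zero_of_mul_eq_zero (a := m ^ 2 * (3 * i + m) ^ 2 * i ^ 2) (u := i)
      (by norm_num) hm (by simp only [binaryForm, List.length]; linear_combination hres / 16)
    simp_all
  · have hF : IsAnisotropic [-3, 2, 9, 0, 60] (ZMod 7) := by decide +kernel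
    have := hF.eq_zero_of_mul_eq_zero (a := m ^ 2 * (3 * i + m) ^ 2) (u := i) (by norm_num) hm
      (by simp only [binaryForm, List.length]; linear_combination hres)
    simp_all

lemma HasUnityEigenratio.add_eq_zero_of_Ghat_two_one (h : HasUnityEigenratio w x y z)
    (hG : Ghat (w, x, y, z) = (W, W / 2, -(W / 2), -W)) : w + z = 0 := by
  obtain ⟨m, n, rfl, rfl⟩ := exists_half_add_and_half_sub w z
  obtain ⟨i, J, rfl, rfl⟩ := exists_half_add_and_half_sub x y
  suffices m = 0 by rw [this]; ring
  by_contra hm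
  obtain ⟨s, hs, hD⟩ := h.exists_quadric hm
  exact hm (eq_zero_of_two_one_equations hs hD (antisymmetric_equation_of_Ghat hD hG)
    (two_one_linear_equation_of_Ghat hD hG))

theorem HasUnityEigenratio.degenerate_of_Ghat_two_one (h : HasUnityEigenratio w x y z)
    (hG : Ghat (w, x, y, z) = (W, W / 2, -(W / 2), -W)) : Degenerate w x y z := by
  have hm := h.add_eq_zero_of_Ghat_two_one hG
  obtain ⟨hW, hX, -, hZ⟩ := Ghat_eq_iff.1 hG
  obtain rfl : z = -w := by linear_combination hm
  obtain rfl : y = -x := cube_left_injective (by linear_combination (hW + hZ) / 3)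
  have hwx : (w + x) * ((2 * w - 3 * x) ^ 2 + 11 * x ^ 2) = 0 := by
    linear_combination 4 * (hW - 2 * hX)
  have hwx : w + x = 0 := by
    by_contra hwx₀
    have hsq : (2 * w - 3 * x) ^ 2 + 11 * x ^ 2 = 0 := (mul_eq_zero.1 hwx).resolve_left hwx₀
    nlinarith [sq_pos_of_ne_zero hwx₀, sq_nonneg x, sq_nonneg (2 * w - 3 * x),
      sq_nonneg (2 * w - 8 * x)]
  obtain rfl : w = -x := by linear_combination hwx
  exact ⟨by ring, by ring, by ring⟩

lemma ends_equation_of_Ghat (hD : J ^ 2 = i ^ 2 + n ^ 2 + s * m ^ 2)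
    (hG : Ghat ((m + n) / 2, (i + J) / 2, (i - J) / 2, (m - n) / 2) = (W, X, -X, W)) :
    n * (n ^ 2 + 3 * m ^ 2) + J * (n ^ 2 + (4 * i ^ 2 + s * m ^ 2)) = 0 := by
  obtain ⟨hW, -, -, hZ⟩ := Ghat_eq_iff.1 hG
  linear_combination 4 * (hW - hZ) - J * hD

lemma ends_linear_and_quadratic (hD : J ^ 2 = i ^ 2 + n ^ 2 + s * m ^ 2)
    (heven : ((m - i) * n ^ 2 + (2 * i ^ 2 * m + (1 - 2 * s) * i * m ^ 2 + s * m ^ 3)) +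
      n * J * (2 * (i + m)) = 0)
    (hodd : n * (n ^ 2 + 3 * m ^ 2) + J * (n ^ 2 + (4 * i ^ 2 + s * m ^ 2)) = 0) :
    (6 * i ^ 3 + 14 * i ^ 2 * m + (3 * s - 3) * i * m ^ 2 + (5 * s - 9) * m ^ 3) * n ^ 2 +
        (8 * i ^ 5 + 16 * i ^ 4 * m + (2 * s + 4) * i ^ 3 * m ^ 2 +
          (16 * s - 6) * i ^ 2 * m ^ 3 + (7 * s - 3) * i * m ^ 4 +
          (3 * s ^ 2 - 3 * s) * m ^ 5) = 0 ∧
      (-3 * i - m) * (n ^ 2) ^ 2 +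
        (-4 * i ^ 3 + 6 * i ^ 2 * m - (3 * s + 5) * i * m ^ 2 + (2 * s - 6) * m ^ 3) * n ^ 2 +
        (8 * i ^ 4 * m + (4 - 8 * s) * i ^ 3 * m ^ 2 + 6 * s * i ^ 2 * m ^ 3 +
          (s - 2 * s ^ 2) * i * m ^ 4 + s ^ 2 * m ^ 5) = 0 := by
  obtain ⟨h₁, h₂⟩ := eliminate_sqrt hD heven hodd
  exact ⟨by linear_combination h₁ + h₂, by linear_combination h₁⟩

lemma add_ne_zero_of_antisymmetric_equation (hm : m ≠ 0) (hs : 0 ≤ s)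
    (heven : ((m - i) * n ^ 2 + (2 * i ^ 2 * m + (1 - 2 * s) * i * m ^ 2 + s * m ^ 3)) +
      n * J * (2 * (i + m)) = 0) : i + m ≠ 0 := by
  intro h
  obtain rfl : i = -m := by linear_combination h
  have hprod : m * (2 * n ^ 2 + (1 + 3 * s) * m ^ 2) = 0 := by linear_combination heven
  exact mul_ne_zero hm (by positivity) hprod

lemma eq_zero_of_ends_equations (hs : s ∈ ({3, 1, 1 / 3, 0} : Set ℚ)) (hm : m ≠ 0)
    (hD : J ^ 2 = i ^ 2 + n ^ 2 + s * m ^ 2)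
    (heven : ((m - i) * n ^ 2 + (2 * i ^ 2 * m + (1 - 2 * s) * i * m ^ 2 + s * m ^ 3)) +
      n * J * (2 * (i + m)) = 0)
    (hodd : n * (n ^ 2 + 3 * m ^ 2) + J * (n ^ 2 + (4 * i ^ 2 + s * m ^ 2)) = 0) :
    s = 0 ∧ i = 0 := by
  have hs₀ : 0 ≤ s := by rcases hs with rfl | rfl | rfl | rfl <;> norm_num
  have hadd := add_ne_zero_of_antisymmetric_equation hm hs₀ heven
  obtain ⟨hlin, hquad⟩ := ends_linear_and_quadratic hD heven hodd
  have hres := linear_quadratic_resultant_eq_zero hlin hquad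
  rcases hs with rfl | rfl | rfl | rfl
  · have hi : i ≠ 0 := by
      rintro rfl
      have hnJ : n + J = 0 := by
        have hprod : (n ^ 2 + 3 * m ^ 2) * (n + J) = 0 := by linear_combination hodd
        exact (mul_eq_zero.1 hprod).resolve_left (by positivity)
      have hsq : 3 * m ^ 2 = 0 := by linear_combination (J - n) * hnJ - hD
      simp_all
    have hF : IsAnisotropic [3, 6, 12, 6, 1] (ZMod 5) := by decide +kernel
    have := hF.eq_zero_of_mul_eq_zero (a := m ^ 2 * (i + m) * i ^ 4) (u := i) (by norm_num) hm
      (by simp only [binaryForm, List.length]; linear_combination -hres / 128)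
    simp_all
  · have hF : IsAnisotropic [1, -6, -14, 0, 9, 12, 28, 24, 4] (ZMod 3) := by decide +kernel
    have := hF.eq_zero_of_mul_eq_zero (a := m ^ 2 * (i + m)) (u := i) (by norm_num) hm
      (by simp only [binaryForm, List.length]; linear_combination hres / 16)
    simp_all
  · have hF : IsAnisotropic [20, 24, 24, -144, -405, -162, 432, 486, 81] (ZMod 7) := by
      decide +kernel
    have := hF.eq_zero_of_mul_eq_zero (a := m ^ 2 * (i + m)) (u := i) (by norm_num) hm
      (by simp only [binaryForm, List.length]; linear_combination hres * 81 / 128)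
    simp_all
  · have hF : IsAnisotropic [81, 171, -144, -543, -312, 360, 480, 80] (ZMod 17) := by
      decide +kernel
    have := hF.eq_zero_of_mul_eq_zero (a := m ^ 2 * (i + m) * i) (u := i) (by norm_num) hm
      (by simp only [binaryForm, List.length]; linear_combination hres / 2)
    simp_all

lemma HasUnityEigenratio.eq_zero_of_Ghat_ends_eq (h : HasUnityEigenratio w x y z)
    (hm : w + z ≠ 0) (hG : Ghat (w, x, y, z) = (W, X, -X, W)) : x = 0 ∧ y = 0 := by
  obtain ⟨m, n, rfl, rfl⟩ := exists_half_add_and_half_sub w z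
  obtain ⟨i, J, rfl, rfl⟩ := exists_half_add_and_half_sub x y
  have hm : m ≠ 0 := fun h ↦ hm (by rw [h]; ring)
  obtain ⟨s, hs, hD⟩ := h.exists_quadric hm
  have heven := antisymmetric_equation_of_Ghat hD hG
  obtain ⟨rfl, rfl⟩ := eq_zero_of_ends_equations hs hm hD heven (ends_equation_of_Ghat hD hG)
  have hnJ : n ^ 2 + 2 * (n * J) = 0 := mul_left_cancel₀ hm (by linear_combination heven)
  have hJ : J ^ 4 = 0 := by
    linear_combination ((3 * J ^ 2 - n ^ 2) * hD + (2 * (n * J) - n ^ 2) * hnJ) / 3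
  obtain rfl : J = 0 := pow_eq_zero_iff four_ne_zero |>.1 hJ
  simp

lemma degenerate_or_eq_zero_of_Ghat_ends_eq_of_add_eq_zero (hG : Ghat (w, x, y, z) = (W, X, -X, W))
    (hm : w + z = 0) : Degenerate w x y z ∨ (x = 0 ∧ y = 0) := by
  obtain ⟨hW, hX, hY, hZ⟩ := Ghat_eq_iff.1 hG
  obtain rfl : z = -w := by linear_combination hm
  obtain ⟨i, J, rfl, rfl⟩ := exists_half_add_and_half_sub x y
  have hodd : 8 * w ^ 3 + J * (3 * i ^ 2 + J ^ 2) = 0 := by linear_combination 4 * (hW - hZ)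
  have heven : i * (2 * w ^ 2 + i ^ 2 - J ^ 2 + 2 * (J * w)) = 0 := by
    linear_combination 2 * (hX + hY)
  rcases mul_eq_zero.1 heven with rfl | hconic
  · left
    obtain rfl : J = -2 * w := cube_left_injective (by linear_combination hodd)
    exact ⟨by ring, by ring, by ring⟩
  right
  have hprod : (J - w) * (2 * J ^ 2 - J * w - 4 * w ^ 2) = 0 := by
    linear_combination (hodd - 3 * J * hconic) / 2
  have hJ : J = 0 := by
    rcases mul_eq_zero.1 hprod with hJ | hJ
    · nlinarith [sq_nonneg i, sq_nonneg J]
    · have hF : IsAnisotropic [-4, -1, 2] (ZMod 5) := by decide +kernel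
      refine (hF.rat (by norm_num) J w ?_).1
      simp only [binaryForm, List.length]
      linear_combination hJ
  subst hJ
  obtain rfl : w = 0 := pow_eq_zero_iff three_ne_zero |>.1 (by linear_combination hprod / 4)
  obtain rfl : i = 0 := pow_eq_zero_iff two_ne_zero |>.1 (by linear_combination hconic)
  simp

theorem HasUnityEigenratio.degenerate_or_eq_zero_of_Ghat_ends_eq (h : HasUnityEigenratio w x y z)
    (hG : Ghat (w, x, y, z) = (W, X, -X, W)) : Degenerate w x y z ∨ (x = 0 ∧ y = 0) := by
  by_cases hm : w + z = 0
  · exact degenerate_or_eq_zero_of_Ghat_ends_eq_of_add_eq_zero hG hm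
  · exact .inr (h.eq_zero_of_Ghat_ends_eq hm hG)

end AntisymmetricMiddleImage

section Normalized

variable {a b c w x y z W X Y Z : ℚ}

lemma degenerate_or_middle_eq_zero (h₁ : X ^ 2 = W * Y) (h₂ : Y ^ 2 = X * Z) :
    Degenerate W X Y Z ∨ (X = 0 ∧ Y = 0) := by
  by_cases hX : X = 0
  · subst hX
    exact .inr ⟨rfl, by simpa using h₂⟩
  by_cases hY : Y = 0
  · subst hY
    exact absurd (by simpa using h₁) hX
  refine .inl ⟨h₁, h₂, mul_left_cancel₀ (mul_ne_zero hX hY) ?_⟩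
  linear_combination Y ^ 2 * h₁ + W * Y * h₂

theorem condS.Ghat_cases (hS : condS W X Y Z) (hT : condT w x y z)
    (hG : Ghat (w, x, y, z) = (W, X, Y, Z)) :
    Degenerate w x y z ∨ (y = -w ∧ z = -x) ∨ (x = 0 ∧ z = 0) ∨ (w = 0 ∧ y = 0) ∨
      (x = 0 ∧ y = 0) ∨ (x = w / 2 ∧ y = -(w / 2) ∧ z = -w) ∨ (x = w ∧ y = -w ∧ z = w) := by
  have hT := hT.eq_zero_or_hasUnityEigenratio_or_det_eq_zero
  have of_harmonic (hY : Y = -W) (hZ : Z = -X) : Degenerate w x y z := by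
    rw [hY, hZ] at hG
    exact .of_Ghat_harmonic hT hG
  have h_or_middle := hS.imp_left fun h ↦ degenerate_or_middle_eq_zero h.1 h.2
  rcases h_or_middle with (h | ⟨rfl, rfl⟩) | ⟨rfl, rfl⟩ | ⟨-, rfl, rfl⟩ | ⟨hY, hX, hZ⟩ |
    ⟨hX, hY, hZ⟩ | ⟨hX, hY, hZ⟩
  · exact (h.degenerate_or_eq_neg_of_Ghat hG).imp_right .inl
  · rcases Ghat_middle_eq_zero_cases hT hG with h | h | h | h | h <;> simp [h]
  · rcases Ghat_middle_eq_zero_cases hT hG with h | h | h | h | h <;> simp [h]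
  · rcases Ghat_odd_eq_zero_cases hT hG with h | h | h <;> simp [h]
  · exact .inl (of_harmonic (by linear_combination hY) (by linear_combination hX + hZ))
  · exact .inl (of_harmonic (by linear_combination hY) (by linear_combination hZ - hX))
  · exact .inl (of_harmonic (by linear_combination hY) (by linear_combination hX - hZ))

lemma HasUnityEigenratio.eq_of_degenerate (hR : HasUnityEigenratio 1 a b c)
    (h : Degenerate 1 a b c) : (a, b, c) = (-1, 1, -1) := by
  obtain ⟨k, -, hk⟩ := hR
  obtain ⟨ha, hb, hab⟩ := h
  obtain rfl : c = -1 := by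
    have hc : (1 + c) ^ 2 = 0 := by linear_combination hk - k * hab
    linear_combination pow_eq_zero_iff two_ne_zero |>.1 hc
  obtain rfl : a = -1 := cube_left_injective (by linear_combination hab + a * ha)
  obtain rfl : b = 1 := by linear_combination -ha
  rfl

lemma HasUnityEigenratio.eq_one_of_neg (hR : HasUnityEigenratio 1 a (-1) (-a)) : a = 1 := by
  obtain ⟨k, -, hk⟩ := hR
  have ha : (1 - a) ^ 2 = 0 := by linear_combination hk
  linear_combination -(pow_eq_zero_iff two_ne_zero |>.1 ha)

end Normalized

theorem stmt_17 (a b c : ℚ) (habc : a * b * c ≠ 0)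
    (hR : condR a b c)
    (hT : condT (Ghat (1, a, b, c)).1 (Ghat (1, a, b, c)).2.1
      (Ghat (1, a, b, c)).2.2.1 (Ghat (1, a, b, c)).2.2.2)
    (hS : condS (Ghat (Ghat (1, a, b, c))).1 (Ghat (Ghat (1, a, b, c))).2.1
      (Ghat (Ghat (1, a, b, c))).2.2.1 (Ghat (Ghat (1, a, b, c))).2.2.2) :
    (a, b, c) = (-1, 1, -1) ∨ (a, b, c) = (1, -1, -1) ∨ (a, b, c) = (-1, 1, 1) ∨
    (a, b, c) = (1, -1, 1) ∨ (a, b, c) = (1/2, -1/2, -1) := by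
  have ha : a ≠ 0 := left_ne_zero_of_mul (left_ne_zero_of_mul habc)
  have hρ := hR.hasUnityEigenratio
  have of_degenerate (h : Degenerate 1 a b c) := hρ.eq_of_degenerate h
  rcases hG₁ : Ghat (1, a, b, c) with ⟨w, x, y, z⟩
  rcases hG₂ : Ghat (w, x, y, z) with ⟨W, X, Y, Z⟩
  simp only [hG₁, hG₂] at hT hS
  rcases hS.Ghat_cases hT hG₂ with h | ⟨rfl, rfl⟩ | ⟨rfl, rfl⟩ | ⟨rfl, rfl⟩ | ⟨rfl, rfl⟩ |
    ⟨rfl, rfl, rfl⟩ | ⟨rfl, rfl, rfl⟩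
  · rcases h.degenerate_or_eq_neg_of_Ghat hG₁ with h | ⟨rfl, rfl⟩
    · exact .inl (of_degenerate h)
    · exact .inr (.inl (by rw [hρ.eq_one_of_neg]))
  · exact .inl (of_degenerate (.of_Ghat_harmonic (.inr (.inl hρ)) hG₁))
  · rcases Ghat_odd_eq_zero_cases (.inr (.inl hρ)) hG₁ with h | ⟨h, -⟩ | ⟨rfl, rfl, rfl⟩
    exacts [.inl (of_degenerate h), absurd h one_ne_zero, .inr (.inr (.inr (.inl rfl)))]
  · rcases Ghat_odd_eq_zero_cases (.inr (.inl hρ.reverse)) (Ghat_reverse hG₁) with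
      h | ⟨-, h⟩ | ⟨rfl, rfl, rfl⟩
    exacts [.inl (of_degenerate h.reverse), absurd h ha, .inr (.inr (.inl rfl))]
  · rcases Ghat_middle_eq_zero_cases (.inr (.inl hρ)) hG₁ with
      h | ⟨h, -⟩ | ⟨h, -⟩ | ⟨h, -⟩ | ⟨rfl, rfl, rfl⟩
    exacts [.inl (of_degenerate h), absurd h ha, absurd h one_ne_zero, absurd h ha,
      .inr (.inr (.inr (.inr (by norm_num))))]
  · exact .inl (of_degenerate (hρ.degenerate_of_Ghat_two_one hG₁))
  · rcases hρ.degenerate_or_eq_zero_of_Ghat_ends_eq hG₁ with h | ⟨h, -⟩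
    exacts [.inl (of_degenerate h), absurd h ha]
end
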